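/- Let (γ_n)_{n≥1} be any sequence of positive integers. Then there exists a C^∞ map f : [-1,1] → [-1,1] that is unimodal (has a unique critical point) such that all periodic points of f are hyperbolic and #Per(f, n) ≥ γ_n for every n ≥ 2, where Per(f, n) denotes the set of periodic points of f of least period n. In particular, the number of periodic points of f can grow faster than any prescribed sequence, so f fails the condition (Exp). -/

import Mathlib

/-- The set of periodic points of `f` of least period `n`. -/
def Per {X : Type*} (f : X → X) (n : ℕ) : Set X :=
  {x | f^[n] x = x ∧ ∀ m : ℕ, 1 ≤ m → m < n → f^[m] x ≠ x}

/-!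
Start from the tent map `x ↦ 1 - 2 |x|` and replace its top by a smooth one which is flat at the
critical point `0` and drops by `(1 + x) e^{-s}`, `s = (4 x)⁻¹`, on the right. A point with drop
`δ` returns to `2^{m + 1} δ - 1` at time `m + 2`, so making the profile `e^{-s}` constant near the
level `s = (m + 1) log 2` would make `f^[m + 2]` the identity there. Instead, the deviation from the
level is given many simple zeros: they are hyperbolic periodic points of period `m + 2`. The profile
remains smooth because it is `e^{-s}` times a factor with bounded derivatives in `s`: up to an error
which can be made small in every `C^j`, the corrections at the levels are translates of a single
one. The level `m = 0` is hidden under the linear branch; points of period `2` are created near the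
fixed point `1/3`.

For hyperbolicity, every noncritical point either is expanded by some iterate, or lies in an
interval which an iterate maps monotonically to itself with only hyperbolic fixed points. If a
periodic orbit meets such an interval, it is the orbit of one of these fixed points. Otherwise no
`|deriv f^[j] x|` is maximal over `j`, whereas one would be if the multiplier were `±1`.
-/

open Set Filter Topology Function Polynomial
open scoped ContDiff

section Multipliers

variable {𝕜 : Type*} [NontriviallyNormedField 𝕜] {f : 𝕜 → 𝕜}

theorem deriv_iterate_add (hf : Differentiable 𝕜 f) (a b : ℕ) (x : 𝕜) :
    deriv (f^[a + b]) x = deriv (f^[a]) (f^[b] x) * deriv (f^[b]) x := by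
  rw [iterate_add]
  exact deriv_comp x (hf.iterate a _) (hf.iterate b _)

theorem deriv_iterate_mul_of_isPeriodicPt (hf : Differentiable 𝕜 f) {n : ℕ} {x : 𝕜}
    (hx : IsPeriodicPt f n x) (k : ℕ) : deriv (f^[n * k]) x = deriv (f^[n]) x ^ k := by
  induction k with
  | zero => simp
  | succ k ih =>
    have hxk : f^[n * k] x = x := hx.mul_const k
    rw [Nat.mul_succ, add_comm, deriv_iterate_add hf, hxk, ih, pow_succ']

theorem norm_deriv_iterate_add_mul (hf : Differentiable 𝕜 f) {n : ℕ} {x : 𝕜}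
    (hx : IsPeriodicPt f n x) (h1 : ‖deriv (f^[n]) x‖ = 1) (j k : ℕ) :
    ‖deriv (f^[j + n * k]) x‖ = ‖deriv (f^[j]) x‖ := by
  have hxk : f^[n * k] x = x := hx.mul_const k
  rw [deriv_iterate_add hf, hxk, deriv_iterate_mul_of_isPeriodicPt hf hx, norm_mul, norm_pow, h1,
    one_pow, mul_one]

theorem deriv_iterate_ne_zero_of_norm_multiplier_eq_one (hf : Differentiable 𝕜 f) {n : ℕ}
    (hn : 0 < n) {x : 𝕜} (hx : IsPeriodicPt f n x) (h1 : ‖deriv (f^[n]) x‖ = 1) (j : ℕ) :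
    deriv (f^[j]) x ≠ 0 := by
  intro h0
  have h := norm_deriv_iterate_add_mul hf hx h1 0 j
  obtain ⟨i, hi⟩ := Nat.exists_eq_add_of_le' (Nat.le_mul_of_pos_left j hn)
  rw [zero_add, hi, deriv_iterate_add hf, h0] at h
  simp at h

theorem norm_multiplier_ne_one_of_isPeriodicPt_iterate (hf : Differentiable 𝕜 f) {n : ℕ}
    (hn : 0 < n) {x : 𝕜} (hx : IsPeriodicPt f n x) {j N : ℕ} (hN : IsPeriodicPt f N (f^[j] x))
    (hd : ‖deriv (f^[N]) (f^[j] x)‖ ≠ 1) : ‖deriv (f^[n]) x‖ ≠ 1 := by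
  intro h1
  have h := norm_deriv_iterate_add_mul hf hx h1 j N
  rw [add_comm, mul_comm, deriv_iterate_add hf, deriv_iterate_mul_of_isPeriodicPt hf hN, norm_mul,
    norm_pow] at h
  have h0 := norm_ne_zero_iff.2 (deriv_iterate_ne_zero_of_norm_multiplier_eq_one hf hn hx h1 j)
  exact hd ((pow_eq_one_iff_of_nonneg (norm_nonneg _) hn.ne').1 ((mul_eq_right₀ h0).1 h))

theorem norm_multiplier_ne_one_of_expanding (hf : Differentiable 𝕜 f) {n : ℕ} (hn : 0 < n)
    {x : 𝕜} (hx : IsPeriodicPt f n x)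
    (hexp : ∀ j, deriv f (f^[j] x) ≠ 0 → ∃ N, 1 < ‖deriv (f^[N]) (f^[j] x)‖) :
    ‖deriv (f^[n]) x‖ ≠ 1 := by
  intro h1
  have hne := deriv_iterate_ne_zero_of_norm_multiplier_eq_one hf hn hx h1
  obtain ⟨j, -, hj⟩ := Finset.exists_max_image (Finset.range n) (fun j ↦ ‖deriv (f^[j]) x‖)
    ⟨0, Finset.mem_range.2 hn⟩
  have hmax (i : ℕ) : ‖deriv (f^[i]) x‖ ≤ ‖deriv (f^[j]) x‖ := by
    rw [← Nat.mod_add_div i n, norm_deriv_iterate_add_mul hf hx h1]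
    exact hj _ (Finset.mem_range.2 (Nat.mod_lt _ hn))
  have hfj : deriv f (f^[j] x) ≠ 0 := fun h0 ↦ hne (1 + j) (by
    rw [deriv_iterate_add hf, iterate_one, h0, zero_mul])
  obtain ⟨N, hN⟩ := hexp j hfj
  have h := hmax (N + j)
  rw [deriv_iterate_add hf, norm_mul] at h
  exact h.not_gt (lt_mul_of_one_lt_left (norm_pos_iff.2 (hne j)) hN)

end Multipliers

section Traps

theorem isFixedPt_of_isPeriodicPt_of_monotoneOn {α : Type*} [LinearOrder α] {g : α → α} {s : Set α}
    (hg : MonotoneOn g s) (hs : MapsTo g s s) {x : α} (hx : x ∈ s) {n : ℕ} (hn : 0 < n)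
    (h : IsPeriodicPt g n x) : IsFixedPt g x := by
  have hmono : Monotone (hs.restrict g s s) := fun a b hab ↦ hg a.2 b.2 hab
  have hfix : (hs.restrict g s s)^[n] ⟨x, hx⟩ = ⟨x, hx⟩ := by
    rw [hs.iterate_restrict]
    exact Subtype.ext h
  rcases le_total x (g x) with hle | hle
  · have hiter := hmono.monotone_iterate_of_le_map (x := ⟨x, hx⟩) hle hn
    exact le_antisymm (hiter.trans_eq hfix) hle
  · have hiter := hmono.antitone_iterate_of_map_le (x := ⟨x, hx⟩) hle hn
    exact le_antisymm hle (hfix.ge.trans hiter)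

variable {f : ℝ → ℝ}

/-- A set on which an iterate `f^[N]` is a monotone self-map with hyperbolic fixed points: every
periodic orbit of `f` that meets such a set is hyperbolic. -/
structure IsHyperbolicTrap (f : ℝ → ℝ) (N : ℕ) (s : Set ℝ) : Prop where
  monotoneOn : MonotoneOn f^[N] s
  mapsTo : MapsTo f^[N] s s
  abs_deriv_ne_one : ∀ y ∈ s, f^[N] y = y → |deriv f^[N] y| ≠ 1

theorem IsHyperbolicTrap.of_fixed_endpoints {N : ℕ} {a b : ℝ} (hmono : MonotoneOn f^[N] (Icc a b))
    (ha : f^[N] a = a) (hb : f^[N] b = b)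
    (hfix : ∀ y ∈ Icc a b, f^[N] y = y → |deriv f^[N] y| ≠ 1) :
    IsHyperbolicTrap f N (Icc a b) where
  monotoneOn := hmono
  mapsTo := by simpa only [ha, hb] using hmono.mapsTo_Icc
  abs_deriv_ne_one := hfix

theorem IsHyperbolicTrap.abs_multiplier_ne_one {N : ℕ} {s : Set ℝ} (h : IsHyperbolicTrap f N s)
    (hf : Differentiable ℝ f) {n : ℕ} (hn : 0 < n) {x : ℝ} (hx : IsPeriodicPt f n x) {j : ℕ}
    (hj : f^[j] x ∈ s) : |deriv (f^[n]) x| ≠ 1 := by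
  have hper : IsPeriodicPt (f^[N]) n (f^[j] x) := by
    rw [IsPeriodicPt, ← iterate_mul]
    exact (hx.apply_iterate j).const_mul N
  have hfix : f^[N] (f^[j] x) = f^[j] x :=
    isFixedPt_of_isPeriodicPt_of_monotoneOn h.monotoneOn h.mapsTo hj hn hper
  exact norm_multiplier_ne_one_of_isPeriodicPt_iterate hf hn hx hfix (h.abs_deriv_ne_one _ hj hfix)

theorem abs_multiplier_ne_one_of_forall_expanding_or_trapped (hf : Differentiable ℝ f)
    (h : ∀ y, deriv f y ≠ 0 →
      (∃ N, 1 < |deriv (f^[N]) y|) ∨ ∃ N s, IsHyperbolicTrap f N s ∧ y ∈ s)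
    {n : ℕ} (hn : 0 < n) {x : ℝ} (hx : IsPeriodicPt f n x) : |deriv (f^[n]) x| ≠ 1 := by
  by_cases htrap : ∃ j N s, IsHyperbolicTrap f N s ∧ f^[j] x ∈ s
  · obtain ⟨j, N, s, hs, hj⟩ := htrap
    exact hs.abs_multiplier_ne_one hf hn hx hj
  · exact norm_multiplier_ne_one_of_expanding hf hn hx fun j hj ↦
      (h _ hj).resolve_right fun ⟨N, s, hs⟩ ↦ htrap ⟨j, N, s, hs⟩

end Traps

section OscillatingSteps

/-- A smooth step reaching height `1` at abscissa `1` which starts with `k` simple zeros in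
`(0, b]`, the last one being `b`. On `[0, b]`, where it oscillates, it is `η`-small in `C¹`; beyond
`b` it is positive and increasing. -/
structure IsOscillatingStep (k : ℕ) (η b : ℝ) (q : ℝ → ℝ) : Prop where
  contDiff : ContDiff ℝ ∞ q
  last_mem : b ∈ Ioo 0 1
  eq_one : ∀ r, 1 ≤ r → q r = 1
  apply_last : q b = 0
  pos_of_last_lt : ∀ r, b < r → 0 < q r
  monotoneOn : MonotoneOn q (Ici b)
  apply_zero_ne_zero : q 0 ≠ 0
  deriv_ne_zero_of_eq_zero : ∀ r, q r = 0 → deriv q r ≠ 0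
  abs_le : ∀ r ∈ Icc 0 b, |q r| ≤ η
  abs_deriv_le : ∀ r ∈ Icc 0 b, |deriv q r| ≤ η
  exists_zeros : ∃ Z : Finset ℝ, Z.card = k ∧ ∀ z ∈ Z, z ∈ Ioc 0 b ∧ q z = 0

namespace IsOscillatingStep

variable {k : ℕ} {η b : ℝ} {q : ℝ → ℝ} {r : ℝ}

theorem hasDerivAt (h : IsOscillatingStep k η b q) (r : ℝ) : HasDerivAt q (deriv q r) r :=
  (h.contDiff.differentiable (by simp) r).hasDerivAt

theorem deriv_nonneg_of_last_lt (h : IsOscillatingStep k η b q) (hr : b < r) : 0 ≤ deriv q r := by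
  rw [← derivWithin_of_mem_nhds (Ici_mem_nhds hr)]
  exact h.monotoneOn.derivWithin_nonneg

theorem abs_le_one (h : IsOscillatingStep k η b q) (hη : η ≤ 1) (hr : 0 ≤ r) : |q r| ≤ 1 := by
  rcases le_or_gt r b with hrb | hrb
  · exact (h.abs_le r ⟨hr, hrb⟩).trans hη
  · rw [abs_of_pos (h.pos_of_last_lt r hrb), ← h.eq_one (max r 1) (le_max_right _ _)]
    exact h.monotoneOn hrb.le (hrb.le.trans (le_max_left _ _)) (le_max_left _ _)

end IsOscillatingStep

/-- The monic polynomial of degree `k` whose roots are the points `(i + 1) / (2 * (k + 1))`,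
`i < k`, of `(0, 1/2)`. -/
noncomputable def equispacedRoots (k : ℕ) : ℝ[X] :=
  ∏ i ∈ Finset.range k, (X - C ((i + 1) / (2 * (k + 1)) : ℝ))

/-- The standard example of an oscillating step: `ε` times `equispacedRoots k` left of `1/2`,
blended into the constant `1` on `[1/2, 1]`. -/
noncomputable def oscillatingStep (k : ℕ) (ε r : ℝ) : ℝ :=
  1 - (1 - Real.smoothTransition (2 * r - 1)) * (1 - ε * (equispacedRoots k).eval r)

variable {k : ℕ} {ε r : ℝ}

theorem eval_equispacedRoots (k : ℕ) (r : ℝ) :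
    (equispacedRoots k).eval r = ∏ i ∈ Finset.range k, (r - (i + 1) / (2 * (k + 1))) := by
  simp [equispacedRoots, eval_prod]

theorem injective_equispaced (k : ℕ) : Injective fun i : ℕ ↦ ((i + 1) / (2 * (k + 1)) : ℝ) := by
  intro i j hij
  have hk : (2 * (k + 1) : ℝ) ≠ 0 := by positivity
  simpa using (div_left_inj' hk).1 hij

theorem equispaced_le {i : ℕ} (hi : i < k) :
    ((i + 1) / (2 * (k + 1)) : ℝ) ≤ k / (2 * (k + 1)) := by
  gcongr
  exact_mod_cast hi

theorem eval_equispacedRoots_mono {r' : ℝ} (hr : (k / (2 * (k + 1)) : ℝ) ≤ r) (hrr' : r ≤ r') :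
    (equispacedRoots k).eval r ≤ (equispacedRoots k).eval r' := by
  rw [eval_equispacedRoots, eval_equispacedRoots]
  refine Finset.prod_le_prod (fun i hi ↦ ?_) fun i _ ↦ by gcongr
  exact sub_nonneg.2 ((equispaced_le (Finset.mem_range.1 hi)).trans hr)

theorem eval_equispacedRoots_pos (hr : (k / (2 * (k + 1)) : ℝ) < r) :
    0 < (equispacedRoots k).eval r := by
  rw [eval_equispacedRoots]
  exact Finset.prod_pos fun i hi ↦
    sub_pos.2 ((equispaced_le (Finset.mem_range.1 hi)).trans_lt hr)

theorem eval_derivative_equispacedRoots_ne_zero (h : (equispacedRoots k).eval r = 0) :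
    (derivative (equispacedRoots k)).eval r ≠ 0 := by
  have hsep : (equispacedRoots k).Separable :=
    separable_prod_X_sub_C_iff'.2 (injective_equispaced k).injOn
  simpa using hsep.aeval_derivative_ne_zero (x := r) (by simpa using h)

theorem contDiff_eval_equispacedRoots (k : ℕ) :
    ContDiff ℝ ∞ fun r ↦ (equispacedRoots k).eval r := by
  simpa using (equispacedRoots k).contDiff_aeval (𝕜 := ℝ) ∞

theorem contDiff_oscillatingStep (k : ℕ) (ε : ℝ) : ContDiff ℝ ∞ (oscillatingStep k ε) := by
  have hpoly := contDiff_eval_equispacedRoots k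
  unfold oscillatingStep
  fun_prop

theorem oscillatingStep_of_le_half (hr : r ≤ 1 / 2) :
    oscillatingStep k ε r = ε * (equispacedRoots k).eval r := by
  rw [oscillatingStep, Real.smoothTransition.zero_of_nonpos (by linarith)]
  ring

theorem oscillatingStep_of_one_le (hr : 1 ≤ r) : oscillatingStep k ε r = 1 := by
  rw [oscillatingStep, Real.smoothTransition.one_of_one_le (by linarith)]
  ring

theorem deriv_oscillatingStep_of_lt_half (hr : r < 1 / 2) :
    deriv (oscillatingStep k ε) r = ε * (derivative (equispacedRoots k)).eval r := by
  have heq : oscillatingStep k ε =ᶠ[𝓝 r] fun r ↦ ε * (equispacedRoots k).eval r :=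
    (eventually_lt_nhds hr).mono fun t ht ↦ oscillatingStep_of_le_half ht.le
  rw [heq.deriv_eq, deriv_const_mul_field, Polynomial.deriv]

theorem oscillatingStep_pos (hε : 0 < ε) (hr : (k / (2 * (k + 1)) : ℝ) < r) :
    0 < oscillatingStep k ε r := by
  have hP : 0 < ε * (equispacedRoots k).eval r := mul_pos hε (eval_equispacedRoots_pos hr)
  have h1 := Real.smoothTransition.le_one (2 * r - 1)
  rw [oscillatingStep]
  rcases (Real.smoothTransition.nonneg (2 * r - 1)).eq_or_lt with h0 | h0
  · rw [← h0]
    linarith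
  · nlinarith

theorem monotoneOn_oscillatingStep (hε : 0 < ε)
    (h1 : ∀ r ∈ Icc (0 : ℝ) 1, ε * (equispacedRoots k).eval r ≤ 1) :
    MonotoneOn (oscillatingStep k ε) (Ici (k / (2 * (k + 1)))) := by
  have hle (r : ℝ) (hr : r ∈ Ici (k / (2 * (k + 1)) : ℝ)) (hr1 : r ≤ 1) :
      0 ≤ 1 - ε * (equispacedRoots k).eval r :=
    sub_nonneg.2 (h1 r ⟨le_trans (by positivity) hr, hr1⟩)
  have hstep (r : ℝ) : 0 ≤ 1 - Real.smoothTransition (2 * r - 1) :=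
    sub_nonneg.2 (Real.smoothTransition.le_one _)
  intro r hr r' hr' hrr'
  rcases le_or_gt 1 r' with h | h
  · rw [oscillatingStep_of_one_le h]
    rcases le_or_gt 1 r with h | h
    · exact (oscillatingStep_of_one_le h).le
    · exact sub_le_self _ (mul_nonneg (hstep r) (hle r hr h.le))
  · have htrans : Real.smoothTransition (2 * r - 1) ≤ Real.smoothTransition (2 * r' - 1) :=
      Real.smoothTransition.monotone (by linarith)
    have hP := eval_equispacedRoots_mono hr hrr'
    unfold oscillatingStep
    have := hle r' hr' h.le
    have := hstep r
    gcongr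

theorem equispaced_last_lt_half (k : ℕ) : (k / (2 * (k + 1)) : ℝ) < 1 / 2 := by
  rw [div_lt_div_iff₀ (by positivity) two_pos]
  linarith

theorem eval_equispacedRoots_eq_zero {i : ℕ} (hi : i < k) :
    (equispacedRoots k).eval ((i + 1) / (2 * (k + 1)) : ℝ) = 0 := by
  rw [eval_equispacedRoots]
  exact Finset.prod_eq_zero (Finset.mem_range.2 hi) (sub_self _)

theorem eval_equispacedRoots_zero_ne_zero (k : ℕ) : (equispacedRoots k).eval 0 ≠ 0 := by
  rw [eval_equispacedRoots]
  refine Finset.prod_ne_zero_iff.2 fun i _ ↦ ?_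
  rw [zero_sub, neg_ne_zero]
  positivity

theorem isOscillatingStep_oscillatingStep (hk : 0 < k) (hε : 0 < ε) {η : ℝ}
    (h : ∀ r ∈ Icc (0 : ℝ) 1, ε * |(equispacedRoots k).eval r| ≤ min 1 η)
    (h' : ∀ r ∈ Icc (0 : ℝ) 1, ε * |(derivative (equispacedRoots k)).eval r| ≤ η) :
    IsOscillatingStep k η (k / (2 * (k + 1))) (oscillatingStep k ε) := by
  have hb := equispaced_last_lt_half k
  have hlast : (equispacedRoots k).eval (k / (2 * (k + 1)) : ℝ) = 0 := by
    obtain ⟨i, rfl⟩ := Nat.exists_eq_add_of_lt hk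
    simpa using eval_equispacedRoots_eq_zero (i := i) (k := 0 + i + 1) (by omega)
  have hIcc {r : ℝ} (hr : r ∈ Icc (0 : ℝ) (k / (2 * (k + 1)))) : r ∈ Icc (0 : ℝ) 1 :=
    ⟨hr.1, by linarith [hr.2]⟩
  refine ⟨contDiff_oscillatingStep k ε, ⟨by positivity, by linarith⟩,
    fun r ↦ oscillatingStep_of_one_le, ?_, fun r ↦ oscillatingStep_pos hε,
    monotoneOn_oscillatingStep hε fun r hr ↦ ?_, ?_, fun r hr ↦ ?_, fun r hr ↦ ?_, fun r hr ↦ ?_,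
    (Finset.range k).image fun i : ℕ ↦ ((i + 1) / (2 * (k + 1)) : ℝ), ?_, fun z hz ↦ ?_⟩
  · rw [oscillatingStep_of_le_half hb.le, hlast, mul_zero]
  · exact (mul_le_mul_of_nonneg_left (le_abs_self _) hε.le).trans ((h r hr).trans (min_le_left _ _))
  · rw [oscillatingStep_of_le_half (by norm_num)]
    exact mul_ne_zero hε.ne' (eval_equispacedRoots_zero_ne_zero k)
  · have hr' : r < 1 / 2 :=
      (not_lt.1 fun hlt ↦ (oscillatingStep_pos hε hlt).ne' hr).trans_lt hb
    rw [oscillatingStep_of_le_half hr'.le] at hr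
    rw [deriv_oscillatingStep_of_lt_half hr']
    exact mul_ne_zero hε.ne'
      (eval_derivative_equispacedRoots_ne_zero ((mul_eq_zero_iff_left hε.ne').1 hr))
  · rw [oscillatingStep_of_le_half (hr.2.trans hb.le), abs_mul, abs_of_pos hε]
    exact (h r (hIcc hr)).trans (min_le_right _ _)
  · rw [deriv_oscillatingStep_of_lt_half (hr.2.trans_lt hb), abs_mul, abs_of_pos hε]
    exact h' r (hIcc hr)
  · rw [Finset.card_image_of_injective _ (injective_equispaced k), Finset.card_range]
  · obtain ⟨i, hi, rfl⟩ := Finset.mem_image.1 hz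
    have hi := Finset.mem_range.1 hi
    have hle := equispaced_le hi
    refine ⟨⟨by positivity, hle⟩, ?_⟩
    rw [oscillatingStep_of_le_half (hle.trans hb.le), eval_equispacedRoots_eq_zero hi, mul_zero]

theorem exists_isOscillatingStep_oscillatingStep (hk : 0 < k) {η : ℝ} (hη : 0 < η) :
    ∃ ε₀ > 0, ∀ ε, 0 < ε → ε ≤ ε₀ →
      IsOscillatingStep k η (k / (2 * (k + 1))) (oscillatingStep k ε) := by
  obtain ⟨M, hM⟩ := isCompact_Icc.exists_bound_of_continuousOn (s := Icc (0 : ℝ) 1)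
    (equispacedRoots k).continuousOn
  obtain ⟨M', hM'⟩ := isCompact_Icc.exists_bound_of_continuousOn (s := Icc (0 : ℝ) 1)
    (derivative (equispacedRoots k)).continuousOn
  have hB : 0 < max 1 (max M M') := lt_max_of_lt_left one_pos
  refine ⟨min 1 η / max 1 (max M M'), by positivity, fun ε hε hε₀ ↦ ?_⟩
  rw [le_div_iff₀ hB] at hε₀
  have hbound {y : ℝ} (hy : |y| ≤ max M M') : ε * |y| ≤ min 1 η :=
    (mul_le_mul_of_nonneg_left (hy.trans (le_max_right _ _)) hε.le).trans hε₀
  exact isOscillatingStep_oscillatingStep hk hε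
    (fun r hr ↦ hbound ((hM r hr).trans (le_max_left _ _)))
    fun r hr ↦ (hbound ((hM' r hr).trans (le_max_right _ _))).trans (min_le_right _ _)

end OscillatingSteps

section Wiggles

/-- The function `u` modulated by an oscillating step `q` evaluated at `c t²`. If `u` increases
through `0`, it has simple zeros at `0` and at `±√(z / c)` for the zeros `z > 0` of `q`. -/
def wiggle (u : ℝ → ℝ) (c : ℝ) (q : ℝ → ℝ) (t : ℝ) : ℝ :=
  u t * q (c * t ^ 2)

variable {k : ℕ} {η b c t : ℝ} {q u : ℝ → ℝ}

theorem mul_pos_of_deriv_pos (hu' : ∀ t, 0 < deriv u t) (hu0 : u 0 = 0) (ht : t ≠ 0) :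
    0 < t * u t := by
  have hmono := strictMono_of_deriv_pos hu'
  rcases ht.lt_or_gt with ht | ht
  · exact mul_pos_of_neg_of_neg ht (hu0 ▸ hmono ht)
  · exact mul_pos ht (hu0 ▸ hmono ht)

theorem wiggle_eq_zero (hq : q (c * t ^ 2) = 0) : wiggle u c q t = 0 := by
  rw [wiggle, hq, mul_zero]

theorem mul_sq_sqrt_div {r : ℝ} (hc : 0 < c) (hr : 0 ≤ r) : c * √(r / c) ^ 2 = r := by
  rw [Real.sq_sqrt (by positivity), mul_div_cancel₀ _ hc.ne']

namespace IsOscillatingStep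

theorem hasDerivAt_wiggle (h : IsOscillatingStep k η b q) (hu : DifferentiableAt ℝ u t) :
    HasDerivAt (wiggle u c q)
      (deriv u t * q (c * t ^ 2) + 2 * c * (t * u t) * deriv q (c * t ^ 2)) t := by
  have hd := hu.hasDerivAt.mul
    ((h.hasDerivAt (c * t ^ 2)).comp t ((hasDerivAt_pow 2 t).const_mul c))
  refine hd.congr_deriv ?_
  rw [comp_apply]
  push_cast
  ring

theorem le_deriv_wiggle (h : IsOscillatingStep k η b q) (hc : 0 ≤ c) (hu : DifferentiableAt ℝ u t)
    (ht : 0 ≤ t * u t) (hb : b < c * t ^ 2) :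
    deriv u t * q (c * t ^ 2) ≤ deriv (wiggle u c q) t := by
  rw [(h.hasDerivAt_wiggle hu).deriv, le_add_iff_nonneg_right]
  have := h.deriv_nonneg_of_last_lt hb
  positivity

theorem abs_wiggle_le (h : IsOscillatingStep k η b q) (hc : 0 ≤ c) (hb : c * t ^ 2 ≤ b) :
    |wiggle u c q t| ≤ |u t| * η := by
  rw [wiggle, abs_mul]
  exact mul_le_mul_of_nonneg_left (h.abs_le _ ⟨by positivity, hb⟩) (abs_nonneg _)

theorem abs_deriv_wiggle_le (h : IsOscillatingStep k η b q) (hc : 0 ≤ c)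
    (hu : DifferentiableAt ℝ u t) (hb : c * t ^ 2 ≤ b) :
    |deriv (wiggle u c q) t| ≤ (|deriv u t| + 2 * c * |t * u t|) * η := by
  have hq := h.abs_le _ ⟨by positivity, hb⟩
  have hq' := h.abs_deriv_le _ ⟨by positivity, hb⟩
  rw [(h.hasDerivAt_wiggle hu).deriv, add_mul]
  refine (abs_add_le _ _).trans ?_
  rw [abs_mul, abs_mul (2 * c * _), abs_mul (2 * c), abs_of_nonneg (by positivity : 0 ≤ 2 * c)]
  gcongr

theorem deriv_wiggle_ne_zero (h : IsOscillatingStep k η b q) (hc : c ≠ 0)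
    (hu' : ∀ t, 0 < deriv u t) (hu0 : u 0 = 0) (ht : wiggle u c q t = 0) :
    deriv (wiggle u c q) t ≠ 0 := by
  rw [(h.hasDerivAt_wiggle (differentiableAt_of_deriv_ne_zero (hu' t).ne')).deriv]
  rcases eq_or_ne t 0 with rfl | ht0
  · simpa using ⟨(hu' 0).ne', h.apply_zero_ne_zero⟩
  · have htu := (mul_pos_of_deriv_pos hu' hu0 ht0).ne'
    have hq := (mul_eq_zero_iff_left (right_ne_zero_of_mul htu)).1 ht
    rw [hq, mul_zero, zero_add]
    exact mul_ne_zero (by simp [hc, htu]) (h.deriv_ne_zero_of_eq_zero _ hq)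

end IsOscillatingStep

end Wiggles

section TemperateGrowth

variable {Q : ℝ → ℝ}

theorem hasTemperateGrowth_deriv (hQ : HasTemperateGrowth Q) : HasTemperateGrowth (deriv Q) := by
  refine ⟨(contDiff_infty_iff_deriv.1 hQ.1).2, fun n ↦ ?_⟩
  obtain ⟨k, C, hC⟩ := hQ.2 (n + 1)
  refine ⟨k, C, fun x ↦ ?_⟩
  rw [norm_iteratedFDeriv_eq_norm_iteratedDeriv, ← iteratedDeriv_succ',
    ← norm_iteratedFDeriv_eq_norm_iteratedDeriv]
  exact hC x

theorem tendsto_expNegInvGlue_mul_comp_inv (hQ : HasTemperateGrowth Q) :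
    Tendsto (fun t ↦ expNegInvGlue t * Q t⁻¹) (𝓝 0) (𝓝 0) := by
  obtain ⟨k, C, hC⟩ := hQ.2 0
  have hlim := expNegInvGlue.tendsto_polynomial_inv_mul_zero (.C C * (2 + X ^ 2) ^ k)
  refine squeeze_zero_norm (fun t ↦ ?_) hlim
  have hQt : |Q t⁻¹| ≤ C * (1 + |t⁻¹|) ^ k := by simpa using hC t⁻¹
  have hC0 : 0 ≤ C := by simpa using (norm_nonneg _).trans (hC 0)
  have habs : 1 + |t⁻¹| ≤ 2 + t⁻¹ ^ 2 := by nlinarith [sq_nonneg (|t⁻¹| - 1), sq_abs t⁻¹]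
  simp only [norm_mul, Real.norm_eq_abs, abs_of_nonneg (expNegInvGlue.nonneg t), eval_mul, eval_C,
    eval_pow, eval_add, eval_X, eval_ofNat]
  rw [mul_comm]
  gcongr ?_ * _
  · exact expNegInvGlue.nonneg t
  · exact hQt.trans (by gcongr)

theorem hasDerivAt_expNegInvGlue_mul_comp_inv (hQ : HasTemperateGrowth Q) (t : ℝ) :
    HasDerivAt (fun t ↦ expNegInvGlue t * Q t⁻¹)
      (expNegInvGlue t * (t⁻¹ ^ 2 * (Q t⁻¹ - deriv Q t⁻¹))) t := by
  rcases eq_or_ne t 0 with rfl | ht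
  · rw [expNegInvGlue.zero, zero_mul, hasDerivAt_iff_tendsto_slope]
    refine ((tendsto_expNegInvGlue_mul_comp_inv (HasTemperateGrowth.id'.mul hQ)).mono_left
      inf_le_left).congr fun t ↦ ?_
    simp [slope_def_field, div_eq_mul_inv, mul_left_comm, mul_comm]
  · have hE : HasDerivAt expNegInvGlue (t⁻¹ ^ 2 * expNegInvGlue t) t := by
      simpa using expNegInvGlue.hasDerivAt_polynomial_eval_inv_mul 1 t
    have hQt : HasDerivAt Q (deriv Q t⁻¹) t⁻¹ :=
      (hQ.1.differentiable (by simp) _).hasDerivAt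
    refine (hE.mul (hQt.comp t (hasDerivAt_inv ht))).congr_deriv ?_
    rw [inv_pow, comp_apply]
    ring

theorem contDiff_expNegInvGlue_mul_comp_inv (hQ : HasTemperateGrowth Q) :
    ContDiff ℝ ∞ fun t ↦ expNegInvGlue t * Q t⁻¹ := by
  refine contDiff_infty.2 fun n ↦ ?_
  induction n generalizing Q with
  | zero =>
    exact contDiff_zero.2 (continuous_iff_continuousAt.2 fun t ↦
      (hasDerivAt_expNegInvGlue_mul_comp_inv hQ t).continuousAt)
  | succ n ih =>
    rw [Nat.cast_add_one]
    refine contDiff_succ_iff_deriv.2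
      ⟨fun t ↦ (hasDerivAt_expNegInvGlue_mul_comp_inv hQ t).differentiableAt, by simp, ?_⟩
    rw [funext fun t ↦ (hasDerivAt_expNegInvGlue_mul_comp_inv hQ t).deriv]
    exact ih ((HasTemperateGrowth.id'.pow 2).mul (hQ.sub (hasTemperateGrowth_deriv hQ)))

end TemperateGrowth

section UniformlyBoundedDerivs

variable {ι : Type*} {φ ψ : ι → ℝ → ℝ}

/-- Boundedness of a family of smooth functions in every `C^j`, uniformly over the line and over the
index. -/
structure HasUniformlyBoundedDerivs (φ : ι → ℝ → ℝ) : Prop where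
  contDiff : ∀ i, ContDiff ℝ ∞ (φ i)
  exists_bound : ∀ j, ∃ C, ∀ i t, |iteratedDeriv j (φ i) t| ≤ C

theorem exists_bound_iteratedDeriv_of_hasCompactSupport {g : ℝ → ℝ} (hg : ContDiff ℝ ∞ g)
    (hsupp : HasCompactSupport g) (j : ℕ) : ∃ C, ∀ t, |iteratedDeriv j g t| ≤ C := by
  obtain ⟨C, hC⟩ := (hsupp.iteratedFDeriv (𝕜 := ℝ) j).exists_bound_of_continuous
    (hg.continuous_iteratedFDeriv (mod_cast le_top))
  exact ⟨C, fun t ↦ (norm_iteratedFDeriv_eq_norm_iteratedDeriv (𝕜 := ℝ)).symm.trans_le (hC t)⟩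

theorem HasUniformlyBoundedDerivs.sub (hφ : HasUniformlyBoundedDerivs φ)
    (hψ : HasUniformlyBoundedDerivs ψ) : HasUniformlyBoundedDerivs fun i ↦ φ i - ψ i := by
  refine ⟨fun i ↦ (hφ.contDiff i).sub (hψ.contDiff i), fun j ↦ ?_⟩
  obtain ⟨C, hC⟩ := hφ.exists_bound j
  obtain ⟨D, hD⟩ := hψ.exists_bound j
  refine ⟨C + D, fun i t ↦ ?_⟩
  rw [iteratedDeriv_sub ((hφ.contDiff i).contDiffAt.of_le (mod_cast le_top))
    ((hψ.contDiff i).contDiffAt.of_le (mod_cast le_top))]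
  exact (abs_sub _ _).trans (add_le_add (hC i t) (hD i t))

theorem exists_amplitudes_hasUniformlyBoundedDerivs {c : ℕ → ℝ → ℝ}
    (hc : ∀ m, ContDiff ℝ ∞ (c m)) (hsupp : ∀ m, HasCompactSupport (c m)) {δ : ℕ → ℝ}
    (hδ : ∀ m, 0 < δ m) :
    ∃ ε : ℕ → ℝ, (∀ m, 0 < ε m ∧ ε m ≤ δ m) ∧ HasUniformlyBoundedDerivs fun m ↦ ε m • c m := by
  choose D hD using fun m ↦ exists_bound_iteratedDeriv_of_hasCompactSupport (hc m) (hsupp m)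
  have hD0 (m j : ℕ) : 0 ≤ D m j := (abs_nonneg _).trans (hD m j 0)
  have hsum (m : ℕ) : 0 ≤ ∑ j ∈ Finset.range (m + 1), D m j := Finset.sum_nonneg fun j _ ↦ hD0 m j
  set ε : ℕ → ℝ := fun m ↦ min 1 (δ m) / (1 + ∑ j ∈ Finset.range (m + 1), D m j) with hε
  have hε0 (m : ℕ) : 0 < ε m := div_pos (lt_min one_pos (hδ m)) (by linarith [hsum m])
  have hεle (m : ℕ) : ε m ≤ min 1 (δ m) :=
    div_le_self (lt_min one_pos (hδ m)).le (by linarith [hsum m])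
  have hdiag {m j : ℕ} (hjm : j ≤ m) : ε m * D m j ≤ 1 := by
    have hj := Finset.single_le_sum (fun j _ ↦ hD0 m j) (Finset.mem_range_succ_iff.2 hjm)
    rw [hε, div_mul_eq_mul_div, div_le_one (by linarith [hsum m])]
    nlinarith [min_le_left 1 (δ m), hD0 m j]
  refine ⟨ε, fun m ↦ ⟨hε0 m, (hεle m).trans (min_le_right _ _)⟩, fun m ↦ (hc m).const_smul (ε m),
    fun j ↦ ⟨1 + ∑ m ∈ Finset.range j, D m j, fun m t ↦ ?_⟩⟩
  have hbound : |iteratedDeriv j (ε m • c m) t| ≤ ε m * D m j := by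
    rw [iteratedDeriv_const_smul_field, smul_eq_mul, abs_mul, abs_of_pos (hε0 m)]
    exact mul_le_mul_of_nonneg_left (hD m j t) (hε0 m).le
  refine hbound.trans ?_
  rcases le_or_gt j m with hjm | hmj
  · exact (hdiag hjm).trans (le_add_of_nonneg_right (Finset.sum_nonneg fun m _ ↦ hD0 m j))
  · have hm := Finset.single_le_sum (fun m _ ↦ hD0 m j) (Finset.mem_range.2 hmj)
    have hεD : ε m * D m j ≤ D m j :=
      mul_le_of_le_one_left (hD0 m j) ((hεle m).trans (min_le_left _ _))
    linarith

variable {a : ι → ℝ} {ρ : ℝ}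

theorem tsum_translates_eq (ha : Pairwise fun i j ↦ 4 * ρ ≤ |a i - a j|)
    (hφ : ∀ i t, ρ ≤ |t| → φ i t = 0) {i : ι} {s : ℝ} (hs : |a i - s| ≤ 3 * ρ) :
    ∑' j, φ j (a j - s) = φ i (a i - s) := by
  refine tsum_eq_single i fun j hj ↦ hφ j _ ?_
  have htri := abs_sub_le (a j) s (a i)
  rw [abs_sub_comm s] at htri
  linarith [ha hj]

theorem tsum_translates_eq_zero (hφ : ∀ i t, ρ ≤ |t| → φ i t = 0) {s : ℝ}
    (hs : ∀ i, ρ ≤ |a i - s|) : ∑' j, φ j (a j - s) = 0 := by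
  simp only [hφ _ _ (hs _), tsum_zero]

theorem tsum_translates_eventuallyEq (ha : Pairwise fun i j ↦ 4 * ρ ≤ |a i - a j|)
    (hφ : ∀ i t, ρ ≤ |t| → φ i t = 0) {i : ι} {s : ℝ} (hs : |a i - s| < 3 * ρ) :
    (fun s ↦ ∑' j, φ j (a j - s)) =ᶠ[𝓝 s] fun s ↦ φ i (a i - s) := by
  have hcont : ContinuousAt (fun s ↦ |a i - s|) s := by fun_prop
  exact (hcont.eventually_lt_const hs).mono fun s' hs' ↦ tsum_translates_eq ha hφ hs'.le

theorem tsum_translates_eventuallyEq_zero (hρ : 0 < ρ) (hφ : ∀ i t, ρ ≤ |t| → φ i t = 0) {s : ℝ}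
    (hs : ∀ i, 2 * ρ ≤ |a i - s|) : (fun s ↦ ∑' j, φ j (a j - s)) =ᶠ[𝓝 s] 0 := by
  filter_upwards [Metric.ball_mem_nhds s hρ] with s' hs'
  refine tsum_translates_eq_zero hφ fun i ↦ ?_
  rw [Metric.mem_ball, Real.dist_eq] at hs'
  linarith [abs_sub_le (a i) s' s, hs i]

theorem HasUniformlyBoundedDerivs.hasTemperateGrowth_tsum_translates
    (hφ : HasUniformlyBoundedDerivs φ) (hρ : 0 < ρ)
    (ha : Pairwise fun i j ↦ 4 * ρ ≤ |a i - a j|) (hsupp : ∀ i t, ρ ≤ |t| → φ i t = 0) :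
    HasTemperateGrowth fun s ↦ ∑' i, φ i (a i - s) := by
  have hlocal (s : ℝ) : (∃ i, (fun s ↦ ∑' j, φ j (a j - s)) =ᶠ[𝓝 s] fun s ↦ φ i (a i - s)) ∨
      (fun s ↦ ∑' j, φ j (a j - s)) =ᶠ[𝓝 s] 0 := by
    by_cases hs : ∃ i, |a i - s| < 2 * ρ
    · obtain ⟨i, hi⟩ := hs
      exact .inl ⟨i, tsum_translates_eventuallyEq ha hsupp (by linarith)⟩
    · push Not at hs
      exact .inr (tsum_translates_eventuallyEq_zero hρ hsupp hs)
  refine ⟨contDiff_iff_contDiffAt.2 fun s ↦ ?_, fun n ↦ ?_⟩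
  · rcases hlocal s with ⟨i, hi⟩ | h0
    · exact ((hφ.contDiff i).comp (contDiff_const.sub contDiff_id)).contDiffAt.congr_of_eventuallyEq
        hi
    · exact contDiffAt_const.congr_of_eventuallyEq h0
  · obtain ⟨C, hC⟩ := hφ.exists_bound n
    refine ⟨0, max C 0, fun s ↦ ?_⟩
    rw [norm_iteratedFDeriv_eq_norm_iteratedDeriv, pow_zero, mul_one]
    rcases hlocal s with ⟨i, hi⟩ | h0
    · rw [hi.iteratedDeriv_eq, iteratedDeriv_comp_const_sub, norm_smul, norm_pow, norm_neg,
        norm_one, one_pow, one_mul]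
      exact (hC i _).trans (le_max_left _ _)
    · rw [h0.iteratedDeriv_eq]
      simp

end UniformlyBoundedDerivs

section CuspWave

/-- The correction of the cusp profile `e^{-s}` near one of its levels `s = (m + 1) log 2`, as a
function of the distance `τ` to that level. On top of `e^τ` it replaces the deviation `e^τ - 1` from
the level by `levelWiggle q τ = (e^τ - 1) q(64 τ²)`, whose zeros are those dictated by `q`; see
`exp_mul_one_add_cuspBump`. -/
noncomputable def cuspBump (q : ℝ → ℝ) (τ : ℝ) : ℝ :=
  (Real.exp (-τ) - 1) * (1 - q (64 * τ ^ 2))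

/-- The factor by which the profile `e^{-s}` of the cusp is modified: the superposition of the
corrections of all levels `s = (m + 1) log 2`. -/
noncomputable def cuspWave (q : ℕ → ℝ → ℝ) (s : ℝ) : ℝ :=
  1 + ∑' m : ℕ, cuspBump (q m) ((m + 1) * Real.log 2 - s)

/-- The relative deviation of the modified profile from its level, as a function of the distance to
the level; see `IsCuspData.exp_neg_mul_cuspWave`. -/
noncomputable abbrev levelWiggle (q : ℝ → ℝ) : ℝ → ℝ :=
  wiggle (fun t ↦ Real.exp t - 1) 64 q

/-- A choice of oscillating steps, one for each period, for which the corrections of the cusp are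
uniformly smooth. The rate at which they get small makes up for the factor `s²` by which
`x ↦ s = (4 x)⁻¹` expands near the level `s = (m + 1) log 2`. -/
structure IsCuspData (k : ℕ → ℕ) (b : ℕ → ℝ) (q : ℕ → ℝ → ℝ) : Prop where
  isOscillatingStep : ∀ m, IsOscillatingStep (k m) (1 / (64 * (m + 2) ^ 2)) (b m) (q m)
  bumps : HasUniformlyBoundedDerivs fun m ↦ cuspBump (q m)

theorem exp_mul_one_add_cuspBump (q : ℝ → ℝ) (τ : ℝ) :
    Real.exp τ * (1 + cuspBump q τ) = 1 + levelWiggle q τ := by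
  rw [cuspBump, levelWiggle, wiggle, Real.exp_neg]
  field_simp
  ring

theorem cuspBump_eq_zero {q : ℝ → ℝ} (hq : ∀ r, 1 ≤ r → q r = 1) (τ : ℝ) (hτ : 1 / 8 ≤ |τ|) :
    cuspBump q τ = 0 := by
  rw [cuspBump, hq _ (by nlinarith [sq_abs τ]), sub_self, mul_zero]

theorem hasCompactSupport_of_eq_zero {g : ℝ → ℝ} {ρ : ℝ} (hg : ∀ t, ρ ≤ |t| → g t = 0) :
    HasCompactSupport g :=
  HasCompactSupport.intro (isCompact_closedBall 0 ρ) fun t ht ↦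
    hg t (le_of_lt (by simpa using ht))

theorem exists_isCuspData {k : ℕ → ℕ} (hk : ∀ m, 0 < k m) : ∃ b q, IsCuspData k b q := by
  choose δ hδ0 hδ using fun m : ℕ ↦
    exists_isOscillatingStep_oscillatingStep (hk m) (η := 1 / (64 * (m + 2) ^ 2)) (by positivity)
  set base : ℝ → ℝ := fun τ ↦
    (Real.exp (-τ) - 1) * (1 - Real.smoothTransition (2 * (64 * τ ^ 2) - 1))
  set c : ℕ → ℝ → ℝ := fun m τ ↦ base τ * (equispacedRoots (k m)).eval (64 * τ ^ 2)
  have hbase : ContDiff ℝ ∞ base := by fun_prop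
  have hbase0 (τ : ℝ) (hτ : 1 / 8 ≤ |τ|) : base τ = 0 := by
    simp only [base, Real.smoothTransition.one_of_one_le (x := 2 * (64 * τ ^ 2) - 1)
      (by nlinarith [sq_abs τ]), sub_self, mul_zero]
  have hc (m : ℕ) : ContDiff ℝ ∞ (c m) := by
    have hpoly := contDiff_eval_equispacedRoots (k m)
    fun_prop
  obtain ⟨ε, hε, hεc⟩ := exists_amplitudes_hasUniformlyBoundedDerivs hc
    (fun m ↦ hasCompactSupport_of_eq_zero (ρ := 1 / 8) fun τ hτ ↦ by
      simp only [c, hbase0 τ hτ, zero_mul]) hδ0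
  have hbump (m : ℕ) : cuspBump (oscillatingStep (k m) (ε m)) = base - ε m • c m := by
    ext τ
    simp only [cuspBump, oscillatingStep, Pi.sub_apply, Pi.smul_apply, smul_eq_mul, base, c]
    ring
  refine ⟨_, fun m ↦ oscillatingStep (k m) (ε m), fun m ↦ hδ m _ (hε m).1 (hε m).2, ?_⟩
  simp only [hbump]
  exact .sub ⟨fun _ ↦ hbase, fun j ↦
    (exists_bound_iteratedDeriv_of_hasCompactSupport hbase (hasCompactSupport_of_eq_zero hbase0)
      j).imp fun C hC _ ↦ hC⟩ hεc

theorem half_le_abs_sub_levels :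
    Pairwise fun m n : ℕ ↦
      4 * (1 / 8 : ℝ) ≤ |(m + 1) * Real.log 2 - (n + 1) * Real.log 2| := by
  intro m n hmn
  have hlog := Real.log_two_gt_d9
  have hdist : (1 : ℝ) ≤ |(m : ℝ) - n| := by
    exact_mod_cast Int.one_le_abs (sub_ne_zero.2 (Nat.cast_injective.ne hmn) : (m : ℤ) - n ≠ 0)
  rw [← sub_mul, add_sub_add_right_eq_sub, abs_mul, abs_of_pos (by linarith : 0 < Real.log 2)]
  nlinarith

namespace IsCuspData

variable {k : ℕ → ℕ} {b : ℕ → ℝ} {q : ℕ → ℝ → ℝ}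

theorem cuspBump_eq_zero (h : IsCuspData k b q) (m : ℕ) (τ : ℝ) (hτ : 1 / 8 ≤ |τ|) :
    cuspBump (q m) τ = 0 :=
  _root_.cuspBump_eq_zero (h.isOscillatingStep m).eq_one τ hτ

theorem hasTemperateGrowth_cuspWave (h : IsCuspData k b q) : HasTemperateGrowth (cuspWave q) :=
  (HasTemperateGrowth.const 1).add (h.bumps.hasTemperateGrowth_tsum_translates (by norm_num)
    half_le_abs_sub_levels h.cuspBump_eq_zero)

theorem cuspWave_eq_one (h : IsCuspData k b q) {s : ℝ}
    (hs : ∀ m : ℕ, 1 / 8 ≤ |(m + 1) * Real.log 2 - s|) : cuspWave q s = 1 := by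
  rw [cuspWave, tsum_translates_eq_zero h.cuspBump_eq_zero hs, add_zero]

theorem cuspWave_eventuallyEq_one (h : IsCuspData k b q) {s : ℝ}
    (hs : ∀ m : ℕ, 1 / 4 ≤ |(m + 1) * Real.log 2 - s|) : cuspWave q =ᶠ[𝓝 s] 1 := by
  filter_upwards [tsum_translates_eventuallyEq_zero (by norm_num) h.cuspBump_eq_zero
    (a := fun m : ℕ ↦ (m + 1) * Real.log 2) (s := s) (by norm_num; exact hs)] with s' hs'
  rw [cuspWave, hs']
  simp

theorem exp_neg_mul_cuspWave (h : IsCuspData k b q) {m : ℕ} {s : ℝ}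
    (hs : |(m + 1) * Real.log 2 - s| ≤ 3 / 8) :
    Real.exp (-s) * cuspWave q s =
      (1 + levelWiggle (q m) ((m + 1) * Real.log 2 - s)) / 2 ^ (m + 1) := by
  have hexp : Real.exp ((m + 1) * Real.log 2 - s) = 2 ^ (m + 1) * Real.exp (-s) := by
    rw [sub_eq_add_neg, Real.exp_add, ← Nat.cast_add_one, Real.exp_nat_mul, Real.exp_log two_pos]
  rw [← exp_mul_one_add_cuspBump, hexp, cuspWave,
    tsum_translates_eq half_le_abs_sub_levels h.cuspBump_eq_zero (hs.trans_eq (by norm_num))]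
  field_simp

end IsCuspData

end CuspWave

section Tent

/-- A map which agrees with the tent map `x ↦ 1 - 2 |x|` away from its top, i.e. outside
`(-1/8, 3/8)`. -/
structure IsTentAwayFromTop (f : ℝ → ℝ) : Prop where
  differentiable : Differentiable ℝ f
  eq_left : ∀ x ≤ -1 / 8, f x = 1 + 2 * x
  eq_right : ∀ x, 3 / 8 ≤ x → f x = 1 - 2 * x

namespace IsTentAwayFromTop

variable {f : ℝ → ℝ} {x : ℝ}

theorem iterate_eq (h : IsTentAwayFromTop f) (n : ℕ) (hx : 2 ^ n * (1 + x) ≤ 7 / 4) :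
    f^[n] x = 2 ^ n * (1 + x) - 1 := by
  induction n with
  | zero => simp
  | succ n ih =>
    rw [pow_succ] at hx
    rw [iterate_succ_apply', ih (by linarith), h.eq_left _ (by linarith)]
    ring

theorem iterate_add_two_eq (h : IsTentAwayFromTop f) (n : ℕ) (hx : 3 / 8 ≤ f x)
    (hn : 2 ^ (n + 1) * (1 - f x) ≤ 7 / 4) : f^[n + 2] x = 2 ^ (n + 1) * (1 - f x) - 1 := by
  have hffx : 1 + f (f x) = 2 * (1 - f x) := by
    rw [h.eq_right _ hx]
    ring
  rw [iterate_add_apply, iterate_succ_apply, iterate_one,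
    h.iterate_eq n (by rwa [hffx, ← mul_assoc, ← pow_succ]), hffx]
  ring

theorem iterate_add_two_eventuallyEq (h : IsTentAwayFromTop f) (n : ℕ) (hx : 3 / 8 < f x)
    (hn : 2 ^ (n + 1) * (1 - f x) < 7 / 4) :
    f^[n + 2] =ᶠ[𝓝 x] fun y ↦ 2 ^ (n + 1) * (1 - f y) - 1 := by
  have hf : ContinuousAt f x := h.differentiable.continuous.continuousAt
  have hf' : ContinuousAt (fun y ↦ 2 ^ (n + 1) * (1 - f y)) x := by fun_prop
  filter_upwards [hf.eventually_const_lt hx, hf'.eventually_lt_const hn] with y hy hny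
  exact h.iterate_add_two_eq n hy.le hny.le

theorem deriv_iterate_add_two (h : IsTentAwayFromTop f) (n : ℕ) (hx : 3 / 8 < f x)
    (hn : 2 ^ (n + 1) * (1 - f x) < 7 / 4) :
    deriv (f^[n + 2]) x = -(2 ^ (n + 1) * deriv f x) := by
  rw [(h.iterate_add_two_eventuallyEq n hx hn).deriv_eq, deriv_sub_const, deriv_const_mul_field,
    deriv_const_sub, mul_neg]

-- The tent map doubles the distance to its fixed point `-1` until the latter exceeds `5/6`; by then
-- the derivative has been multiplied by more than `5 / (6 (1 - f x))`.
theorem exists_one_lt_abs_deriv_iterate (h : IsTentAwayFromTop f) (hx : 3 / 8 < f x)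
    (hx1 : f x < 1) (hd : 6 / 5 * (1 - f x) < |deriv f x|) : ∃ N, 1 < |deriv (f^[N]) x| := by
  have hpos : 0 < 1 - f x := sub_pos.2 hx1
  obtain ⟨n, hn, hn'⟩ := exists_nat_pow_near (x := 5 / 6 / (1 - f x)) (y := 2)
    (by rw [one_le_div hpos]; linarith) one_lt_two
  rw [le_div_iff₀ hpos] at hn
  rw [div_lt_iff₀ hpos] at hn'
  refine ⟨n + 2, ?_⟩
  rw [h.deriv_iterate_add_two n hx (by rw [pow_succ]; linarith), abs_neg, abs_mul, abs_pow, abs_two]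
  nlinarith [pow_pos (zero_lt_two' ℝ) (n + 1)]

end IsTentAwayFromTop

end Tent

section GrowthMap

/-- The distance of `growthMap q x` to the maximum `1` for `x` slightly to the right of the critical
point. Since `expNegInvGlue (4 x) = e^{-s}` for `s = (4 x)⁻¹`, the drop equals
`2^{-(m + 1)} (1 + x)` at the level `s = (m + 1) log 2`. -/
noncomputable def cuspDrop (q : ℕ → ℝ → ℝ) (x : ℝ) : ℝ :=
  (1 + x) * (expNegInvGlue (4 * x) * cuspWave q (4 * x)⁻¹)

/-- The unimodal map with the required periodic points: the tent map `x ↦ 1 - 2 |x|` with its top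
`(-1/8, 9/32)` replaced by a flat left shoulder and a right shoulder which drops by `cuspDrop q`,
and deformed near its fixed point `1/3` according to `q 0`. -/
noncomputable def growthMap (q : ℕ → ℝ → ℝ) (x : ℝ) : ℝ :=
  1 + 2 * x * Real.smoothTransition (-8 * x) -
      ((1 - Real.smoothTransition (32 * x - 8)) * cuspDrop q x +
        Real.smoothTransition (32 * x - 8) * (2 * x)) +
    (x - 1 / 3) * (1 - q 0 (576 * (x - 1 / 3) ^ 2))

namespace IsCuspData

variable {k : ℕ → ℕ} {b : ℕ → ℝ} {q : ℕ → ℝ → ℝ} {x : ℝ}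

theorem contDiff_cuspDrop (h : IsCuspData k b q) : ContDiff ℝ ∞ (cuspDrop q) :=
  (contDiff_const.add contDiff_id).mul
    ((contDiff_expNegInvGlue_mul_comp_inv h.hasTemperateGrowth_cuspWave).comp
      (contDiff_const.mul contDiff_id))

theorem contDiff_growthMap (h : IsCuspData k b q) : ContDiff ℝ ∞ (growthMap q) := by
  have hdrop := h.contDiff_cuspDrop
  have hq := (h.isOscillatingStep 0).contDiff
  unfold growthMap
  fun_prop

theorem differentiable_growthMap (h : IsCuspData k b q) : Differentiable ℝ (growthMap q) :=
  h.contDiff_growthMap.differentiable (by simp)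

theorem growthMap_of_le (h : IsCuspData k b q) (hx : x ≤ 7 / 24) :
    growthMap q x = 1 + 2 * x * Real.smoothTransition (-8 * x) -
      ((1 - Real.smoothTransition (32 * x - 8)) * cuspDrop q x +
        Real.smoothTransition (32 * x - 8) * (2 * x)) := by
  rw [growthMap, (h.isOscillatingStep 0).eq_one _ (by nlinarith)]
  ring

theorem growthMap_of_nonpos (h : IsCuspData k b q) (hx : x ≤ 0) :
    growthMap q x = 1 + 2 * x * Real.smoothTransition (-8 * x) := by
  rw [h.growthMap_of_le (by linarith),
    Real.smoothTransition.zero_of_nonpos (x := 32 * x - 8) (by linarith), cuspDrop,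
    expNegInvGlue.zero_of_nonpos (by linarith)]
  ring

theorem growthMap_of_mem_Icc (h : IsCuspData k b q) (hx : x ∈ Icc 0 (7 / 24)) :
    growthMap q x = 1 - ((1 - Real.smoothTransition (32 * x - 8)) * cuspDrop q x +
      Real.smoothTransition (32 * x - 8) * (2 * x)) := by
  rw [h.growthMap_of_le hx.2, Real.smoothTransition.zero_of_nonpos (by linarith [hx.1])]
  ring

theorem growthMap_of_mem_Icc_quarter (h : IsCuspData k b q) (hx : x ∈ Icc 0 (1 / 4)) :
    growthMap q x = 1 - cuspDrop q x := by
  rw [h.growthMap_of_mem_Icc ⟨hx.1, by linarith [hx.2]⟩,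
    Real.smoothTransition.zero_of_nonpos (by linarith [hx.2])]
  ring

theorem growthMap_of_ge (hx : 9 / 32 ≤ x) :
    growthMap q x = 1 / 3 - (x - 1 / 3) * (1 + q 0 (576 * (x - 1 / 3) ^ 2)) := by
  rw [growthMap, Real.smoothTransition.zero_of_nonpos (by linarith),
    Real.smoothTransition.one_of_one_le (by linarith)]
  ring

theorem isTentAwayFromTop_growthMap (h : IsCuspData k b q) : IsTentAwayFromTop (growthMap q) where
  differentiable := h.differentiable_growthMap
  eq_left x hx := by
    rw [h.growthMap_of_nonpos (by linarith), Real.smoothTransition.one_of_one_le (by linarith),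
      mul_one]
  eq_right x hx := by
    rw [growthMap_of_ge (by linarith), (h.isOscillatingStep 0).eq_one _ (by nlinarith)]
    ring

theorem le_deriv_growthMap_of_neg (h : IsCuspData k b q) (hx : x < 0) :
    2 * Real.smoothTransition (-8 * x) ≤ deriv (growthMap q) x := by
  have heq : growthMap q =ᶠ[𝓝 x] fun y ↦ 1 + 2 * y * Real.smoothTransition (-8 * y) :=
    (eventually_lt_nhds hx).mono fun y hy ↦ h.growthMap_of_nonpos hy.le
  have hS : HasDerivAt Real.smoothTransition (deriv Real.smoothTransition (-8 * x)) (-8 * x) :=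
    (Real.smoothTransition.contDiff.differentiable one_ne_zero _).hasDerivAt
  have hS0 : 0 ≤ deriv Real.smoothTransition (-8 * x) :=
    Real.smoothTransition.monotone.deriv_nonneg
  have hd := (((hasDerivAt_id' x).const_mul 2).mul
    (hS.comp x ((hasDerivAt_id' x).const_mul (-8)))).const_add 1
  rw [(hd.congr_of_eventuallyEq heq).deriv, comp_apply]
  nlinarith [mul_nonneg (neg_nonneg.2 hx.le) hS0]

theorem deriv_growthMap_pos_of_neg (h : IsCuspData k b q) (hx : x < 0) :
    0 < deriv (growthMap q) x :=
  (mul_pos two_pos (Real.smoothTransition.pos_of_pos (by linarith))).trans_le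
    (h.le_deriv_growthMap_of_neg hx)

theorem expanding_of_neg (h : IsCuspData k b q) (hx : x < 0) :
    ∃ N, 1 < |deriv ((growthMap q)^[N]) x| := by
  have hd := h.le_deriv_growthMap_of_neg hx
  rcases le_or_gt x (-1 / 8) with hx8 | hx8
  · refine ⟨1, lt_abs.2 (.inl ?_)⟩
    rw [Real.smoothTransition.one_of_one_le (by linarith)] at hd
    rw [iterate_one]
    linarith
  · have hS : 0 < Real.smoothTransition (-8 * x) := Real.smoothTransition.pos_of_pos (by linarith)
    have hS1 := Real.smoothTransition.le_one (-8 * x)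
    have hf := h.growthMap_of_nonpos hx.le
    refine h.isTentAwayFromTop_growthMap.exists_one_lt_abs_deriv_iterate ?_ ?_
      (lt_abs.2 (.inl ?_)) <;> nlinarith

end IsCuspData

end GrowthMap

section Center

/-- The map `growthMap q` seen from its fixed point `1/3`, up to a reflection; see
`IsCuspData.growthMap_third_add`. -/
noncomputable def centralMap (q : ℝ → ℝ) (y : ℝ) : ℝ :=
  y + wiggle id 576 q y

theorem centralMap_neg (q : ℝ → ℝ) (y : ℝ) : centralMap q (-y) = -centralMap q y := by
  simp only [centralMap, wiggle, id, neg_sq]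
  ring

theorem growthMap_third_add (q : ℕ → ℝ → ℝ) {y : ℝ} (hy : -5 / 96 ≤ y) :
    growthMap q (1 / 3 + y) = 1 / 3 - centralMap (q 0) y := by
  rw [IsCuspData.growthMap_of_ge (by linarith), centralMap, wiggle, id, add_sub_cancel_left]
  ring

namespace IsOscillatingStep

variable {k : ℕ} {η b : ℝ} {q : ℝ → ℝ} {y : ℝ}

theorem deriv_centralMap (h : IsOscillatingStep k η b q) (y : ℝ) :
    deriv (centralMap q) y = 1 + deriv (wiggle id 576 q) y :=
  ((hasDerivAt_id' y).add
    (h.hasDerivAt_wiggle differentiableAt_id).differentiableAt.hasDerivAt).deriv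

theorem deriv_centralMap_neg (h : IsOscillatingStep k η b q) (y : ℝ) :
    deriv (centralMap q) (-y) = deriv (centralMap q) y := by
  simp only [h.deriv_centralMap, (h.hasDerivAt_wiggle differentiableAt_id).deriv, deriv_id, id,
    neg_sq, neg_mul_neg]

theorem one_lt_deriv_centralMap (h : IsOscillatingStep k η b q) (hy : b < 576 * y ^ 2) :
    1 < deriv (centralMap q) y := by
  have hW := h.le_deriv_wiggle (u := id) (by norm_num) differentiableAt_id (mul_self_nonneg y) hy
  have hq := h.pos_of_last_lt _ hy
  rw [deriv_id] at hW
  rw [h.deriv_centralMap]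
  linarith

theorem deriv_centralMap_pos (h : IsOscillatingStep k η b q) (hη : η ≤ 1 / 4) (y : ℝ) :
    0 < deriv (centralMap q) y := by
  rcases lt_or_ge b (576 * y ^ 2) with hy | hy
  · exact one_pos.trans (h.one_lt_deriv_centralMap hy)
  · have hW := h.abs_deriv_wiggle_le (by norm_num) differentiableAt_id hy
    have hb := h.last_mem
    have hη0 : 0 ≤ η := (abs_nonneg _).trans (h.abs_le b ⟨hb.1.le, le_rfl⟩)
    rw [deriv_id, id, abs_one, abs_mul_self] at hW
    rw [h.deriv_centralMap]
    nlinarith [hb.2, neg_le_of_abs_le hW]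

theorem strictMono_centralMap (h : IsOscillatingStep k η b q) (hη : η ≤ 1 / 4) :
    StrictMono (centralMap q) :=
  strictMono_of_deriv_pos (h.deriv_centralMap_pos hη)

theorem centralMap_sqrt_last (h : IsOscillatingStep k η b q) :
    centralMap q √(b / 576) = √(b / 576) := by
  rw [centralMap, wiggle_eq_zero, add_zero]
  rw [mul_sq_sqrt_div (by norm_num) h.last_mem.1.le, h.apply_last]

theorem mapsTo_centralMap (h : IsOscillatingStep k η b q) (hη : η ≤ 1 / 4) :
    MapsTo (centralMap q) (Icc (-√(b / 576)) √(b / 576)) (Icc (-√(b / 576)) √(b / 576)) := by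
  simpa only [centralMap_neg, h.centralMap_sqrt_last] using
    (h.strictMono_centralMap hη).monotone.mapsTo_Icc (a := -√(b / 576)) (b := √(b / 576))

theorem deriv_centralMap_ne_one (h : IsOscillatingStep k η b q) (hy : centralMap q y = y) :
    deriv (centralMap q) y ≠ 1 := by
  rw [h.deriv_centralMap, Ne, add_eq_left]
  exact h.deriv_wiggle_ne_zero (by norm_num) (by simp) rfl (add_eq_left.1 hy)

end IsOscillatingStep

namespace IsCuspData

variable {k : ℕ → ℕ} {b : ℕ → ℝ} {q : ℕ → ℝ → ℝ} {x : ℝ}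

theorem isOscillatingStep_quarter (h : IsCuspData k b q) (m : ℕ) :
    ∃ η ≤ 1 / 4, IsOscillatingStep (k m) η (b m) (q m) := by
  refine ⟨_, ?_, h.isOscillatingStep m⟩
  rw [div_le_div_iff₀ (by positivity) (by norm_num)]
  nlinarith [(m.cast_nonneg : (0 : ℝ) ≤ m)]

theorem deriv_growthMap_of_gt (q : ℕ → ℝ → ℝ) (hx : 9 / 32 < x) :
    deriv (growthMap q) x = -deriv (centralMap (q 0)) (x - 1 / 3) := by
  have heq : growthMap q =ᶠ[𝓝 x] fun y ↦ 1 / 3 - centralMap (q 0) (y - 1 / 3) :=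
    (eventually_gt_nhds hx).mono fun y hy ↦ by
      simpa only [add_sub_cancel] using growthMap_third_add q (y := y - 1 / 3) (by linarith)
  rw [heq.deriv_eq, deriv_const_sub, deriv_comp_sub_const]

theorem deriv_growthMap_neg_of_gt (h : IsCuspData k b q) (hx : 9 / 32 < x) :
    deriv (growthMap q) x < 0 := by
  obtain ⟨η, hη, hq⟩ := h.isOscillatingStep_quarter 0
  rw [deriv_growthMap_of_gt q hx]
  exact neg_neg_of_pos (hq.deriv_centralMap_pos hη _)

theorem sqrt_div_lt (h : IsCuspData k b q) : √(b 0 / 576) < 1 / 24 := by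
  have hb := (h.isOscillatingStep 0).last_mem
  rw [Real.sqrt_lt' (by norm_num)]
  linarith [hb.2]

theorem iterate_two_growthMap_third_add (h : IsCuspData k b q) {y : ℝ}
    (hy : y ∈ Icc (-√(b 0 / 576)) √(b 0 / 576)) :
    (growthMap q)^[2] (1 / 3 + y) = 1 / 3 + (centralMap (q 0))^[2] y := by
  obtain ⟨η, hη, hq⟩ := h.isOscillatingStep_quarter 0
  have hb := h.sqrt_div_lt
  have hB := hq.mapsTo_centralMap hη hy
  rw [iterate_succ_apply, iterate_one, iterate_succ_apply, iterate_one,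
    growthMap_third_add q (by linarith [hy.1]), sub_eq_add_neg,
    growthMap_third_add q (by linarith [hB.2]), centralMap_neg, sub_neg_eq_add]

theorem deriv_iterate_two_growthMap_third_add (h : IsCuspData k b q) {y : ℝ}
    (hy : y ∈ Icc (-√(b 0 / 576)) √(b 0 / 576)) (hfix : centralMap (q 0) y = y) :
    deriv (growthMap q)^[2] (1 / 3 + y) = deriv (centralMap (q 0)) y ^ 2 := by
  have hb := h.sqrt_div_lt
  rw [deriv_iterate_add h.differentiable_growthMap 1 1, iterate_one,
    growthMap_third_add q (by linarith [hy.1]), hfix, deriv_growthMap_of_gt q (by linarith [hy.2]),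
    deriv_growthMap_of_gt q (by linarith [hy.1]), sub_sub_cancel_left, add_sub_cancel_left,
    (h.isOscillatingStep 0).deriv_centralMap_neg, neg_mul_neg, sq]

theorem isHyperbolicTrap_center (h : IsCuspData k b q) :
    IsHyperbolicTrap (growthMap q) 2 (Icc (1 / 3 - √(b 0 / 576)) (1 / 3 + √(b 0 / 576))) := by
  obtain ⟨η, hη, hq⟩ := h.isOscillatingStep_quarter 0
  have hmono := (hq.strictMono_centralMap hη).monotone
  have hmem {x : ℝ} (hx : x ∈ Icc (1 / 3 - √(b 0 / 576)) (1 / 3 + √(b 0 / 576))) :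
      ∃ y ∈ Icc (-√(b 0 / 576)) √(b 0 / 576), 1 / 3 + y = x :=
    ⟨x - 1 / 3, ⟨by linarith [hx.1], by linarith [hx.2]⟩, by ring⟩
  have hβ : -√(b 0 / 576) ≤ √(b 0 / 576) := neg_le_self (Real.sqrt_nonneg _)
  refine .of_fixed_endpoints ?_ ?_ ?_ ?_
  · intro x hx x' hx' hxx'
    obtain ⟨y, hy, rfl⟩ := hmem hx
    obtain ⟨y', hy', rfl⟩ := hmem hx'
    rw [h.iterate_two_growthMap_third_add hy, h.iterate_two_growthMap_third_add hy']
    exact add_le_add_right (hmono.iterate 2 (le_of_add_le_add_left hxx')) _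
  · rw [sub_eq_add_neg, h.iterate_two_growthMap_third_add (left_mem_Icc.2 hβ)]
    simp only [iterate_succ_apply, iterate_zero_apply, centralMap_neg, hq.centralMap_sqrt_last]
  · rw [h.iterate_two_growthMap_third_add (right_mem_Icc.2 hβ)]
    simp only [iterate_succ_apply, iterate_zero_apply, hq.centralMap_sqrt_last]
  · intro x hx hfix
    obtain ⟨y, hy, rfl⟩ := hmem hx
    rw [h.iterate_two_growthMap_third_add hy, add_right_inj] at hfix
    have hBy : centralMap (q 0) y = y :=
      isFixedPt_of_isPeriodicPt_of_monotoneOn (hmono.monotoneOn univ) (mapsTo_univ _ _)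
        (mem_univ y) two_pos hfix
    rw [h.deriv_iterate_two_growthMap_third_add hy hBy, abs_pow, Ne,
      pow_eq_one_iff_of_nonneg (abs_nonneg _) two_ne_zero,
      abs_of_pos (hq.deriv_centralMap_pos hη y)]
    exact hq.deriv_centralMap_ne_one hBy

theorem expanding_or_trapped_of_gt (h : IsCuspData k b q) (hx : 9 / 32 < x) :
    (∃ N, 1 < |deriv ((growthMap q)^[N]) x|) ∨
      ∃ N s, IsHyperbolicTrap (growthMap q) N s ∧ x ∈ s := by
  have hq := h.isOscillatingStep 0
  rcases lt_or_ge (b 0) (576 * (x - 1 / 3) ^ 2) with hb | hb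
  · left
    refine ⟨1, ?_⟩
    rw [iterate_one, deriv_growthMap_of_gt q hx, abs_neg]
    exact lt_abs.2 (.inl (hq.one_lt_deriv_centralMap hb))
  · right
    refine ⟨2, _, h.isHyperbolicTrap_center, ?_⟩
    have hx' : |x - 1 / 3| ≤ √(b 0 / 576) := Real.abs_le_sqrt (by linarith)
    rw [abs_le] at hx'
    exact ⟨by linarith, by linarith⟩

end IsCuspData

end Center

section Levels

/-- The signed distance of `s = (4 x)⁻¹` to the level `(m + 1) log 2`. -/
noncomputable def levelPhase (m : ℕ) (x : ℝ) : ℝ :=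
  (m + 1) * Real.log 2 - (4 * x)⁻¹

/-- The point `x > 0` at which `levelPhase m` takes the value `t < (m + 1) log 2`. -/
noncomputable def levelPoint (m : ℕ) (t : ℝ) : ℝ :=
  ((m + 1) * Real.log 2 - t)⁻¹ / 4

variable {m : ℕ} {t x : ℝ}

theorem log_two_sub_pos (m : ℕ) (ht : t ≤ 1 / 4) : 0 < (m + 1) * Real.log 2 - t := by
  nlinarith [Real.log_two_gt_d9, (m.cast_nonneg : (0 : ℝ) ≤ m)]

theorem levelPoint_pos (m : ℕ) (ht : t ≤ 1 / 4) : 0 < levelPoint m t :=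
  div_pos (inv_pos.2 (log_two_sub_pos m ht)) four_pos

theorem levelPhase_levelPoint (m : ℕ) (t : ℝ) : levelPhase m (levelPoint m t) = t := by
  rw [levelPhase, levelPoint, mul_div_cancel₀ _ four_ne_zero, inv_inv, sub_sub_cancel]

theorem levelPoint_le_iff (hx : 0 < x) (ht : t ≤ 1 / 4) :
    levelPoint m t ≤ x ↔ t ≤ levelPhase m x := by
  rw [levelPoint, levelPhase, div_le_iff₀' four_pos, le_sub_comm,
    inv_le_comm₀ (log_two_sub_pos m ht) (by positivity)]

theorem le_levelPoint_iff (hx : 0 < x) (ht : t ≤ 1 / 4) :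
    x ≤ levelPoint m t ↔ levelPhase m x ≤ t := by
  rw [levelPoint, levelPhase, le_div_iff₀' four_pos, sub_le_comm,
    le_inv_comm₀ (by positivity) (log_two_sub_pos m ht)]

theorem lt_quarter_of_abs_levelPhase_le (hx : 0 < x) (hm : 1 ≤ m) (hτ : |levelPhase m x| ≤ 1 / 4) :
    x < 1 / 4 := by
  have hm' : (1 : ℝ) ≤ m := by exact_mod_cast hm
  have hs : 1 < (4 * x)⁻¹ := by
    rw [levelPhase, abs_le] at hτ
    nlinarith [Real.log_two_gt_d9]
  linarith [(one_lt_inv₀ (by positivity)).1 hs]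

theorem one_le_of_abs_levelPhase_lt (hx : 0 < x) (hx' : x < 1 / 4) (hτ : |levelPhase m x| < 1 / 4) :
    1 ≤ m := by
  rw [Nat.one_le_iff_ne_zero]
  rintro rfl
  have hs : 1 < (4 * x)⁻¹ := (one_lt_inv₀ (by positivity)).2 (by linarith)
  rw [levelPhase, abs_lt, Nat.cast_zero] at hτ
  linarith [Real.log_two_lt_d9]

theorem hasDerivAt_levelPhase (m : ℕ) (hx : 0 < x) :
    HasDerivAt (levelPhase m) (1 / (4 * x ^ 2)) x := by
  refine ((((hasDerivAt_id' x).const_mul 4).inv (by positivity)).const_sub _).congr_deriv ?_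
  field_simp

end Levels

section Shoulder

/-- What `cuspDrop q` is away from the levels, where the factor `cuspWave q` is `1`. -/
noncomputable def expDrop (x : ℝ) : ℝ :=
  (1 + x) * expNegInvGlue (4 * x)

section ExpDrop

variable {x : ℝ}

theorem expNegInvGlue_of_pos (hx : 0 < x) : expNegInvGlue x = Real.exp (-x⁻¹) :=
  if_neg hx.not_ge

theorem hasDerivAt_expNegInvGlue_of_pos (hx : 0 < x) :
    HasDerivAt expNegInvGlue (expNegInvGlue x / x ^ 2) x := by
  have heq : expNegInvGlue =ᶠ[𝓝 x] fun y ↦ Real.exp (-y⁻¹) :=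
    (eventually_gt_nhds hx).mono fun y hy ↦ expNegInvGlue_of_pos hy
  refine ((hasDerivAt_inv hx.ne').neg.exp.congr_of_eventuallyEq heq).congr_deriv ?_
  rw [expNegInvGlue_of_pos hx, neg_neg, div_eq_mul_inv]
  rfl

theorem hasDerivAt_expDrop (hx : 0 < x) :
    HasDerivAt expDrop ((1 + (1 + x) / (4 * x ^ 2)) * expNegInvGlue (4 * x)) x := by
  have hE := (hasDerivAt_expNegInvGlue_of_pos (by positivity : 0 < 4 * x)).comp x
    ((hasDerivAt_id' x).const_mul 4)
  refine (((hasDerivAt_id' x).const_add 1).mul hE).congr_deriv ?_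
  rw [comp_apply]
  field_simp

theorem expDrop_pos (hx : 0 < x) : 0 < expDrop x :=
  mul_pos (by positivity) (expNegInvGlue.pos_of_pos (by positivity))

theorem expDrop_le_two_mul (hx : 0 ≤ x) (hx' : x ≤ 7 / 24) : expDrop x ≤ 2 * x := by
  rcases hx.eq_or_lt with rfl | hx0
  · simp [expDrop]
  · have hE : expNegInvGlue (4 * x) ≤ 4 * x * Real.exp (-1) := by
      have hs : (4 * x)⁻¹ ≤ Real.exp ((4 * x)⁻¹ - 1) := by
        linarith [Real.add_one_le_exp ((4 * x)⁻¹ - 1)]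
      calc expNegInvGlue (4 * x) = 4 * x * ((4 * x)⁻¹ * Real.exp (-(4 * x)⁻¹)) := by
            rw [expNegInvGlue_of_pos (by positivity), mul_inv_cancel_left₀ (by positivity)]
        _ ≤ 4 * x * (Real.exp ((4 * x)⁻¹ - 1) * Real.exp (-(4 * x)⁻¹)) := by gcongr
        _ = 4 * x * Real.exp (-1) := by
            rw [← Real.exp_add]
            ring_nf
    have he := Real.exp_neg_one_lt_d9
    calc expDrop x ≤ (1 + x) * (4 * x * Real.exp (-1)) :=
          mul_le_mul_of_nonneg_left hE (by positivity)
      _ = 4 * ((1 + x) * Real.exp (-1)) * x := by ring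
      _ ≤ 2 * x := by
          gcongr
          nlinarith

theorem four_mul_expDrop_lt_deriv (hx : 0 < x) (hx' : x ≤ 1 / 4) :
    4 * expDrop x < deriv expDrop x := by
  have hE : 0 < expNegInvGlue (4 * x) := expNegInvGlue.pos_of_pos (by linarith)
  have hA : 4 * (1 + x) ≤ (1 + x) / (4 * x ^ 2) := by
    rw [le_div_iff₀ (by positivity)]
    nlinarith [sq_nonneg x]
  rw [(hasDerivAt_expDrop hx).deriv, expDrop, ← mul_assoc]
  gcongr
  linarith

theorem one_lt_deriv_expDrop (hx : 1 / 4 ≤ x) (hx' : x ≤ 7 / 24) : 1 < deriv expDrop x := by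
  have hE : 0.36 ≤ expNegInvGlue (4 * x) := by
    rw [expNegInvGlue_of_pos (by linarith)]
    have hinv : (4 * x)⁻¹ ≤ 1 := inv_le_one_of_one_le₀ (by linarith)
    linarith [Real.exp_neg_one_gt_d9, Real.exp_le_exp.2 (neg_le_neg hinv)]
  have hA : 3 ≤ (1 + x) / (4 * x ^ 2) := by
    rw [le_div_iff₀ (by positivity)]
    nlinarith
  rw [(hasDerivAt_expDrop (by linarith)).deriv]
  nlinarith

end ExpDrop

namespace IsCuspData

variable {k : ℕ → ℕ} {b : ℕ → ℝ} {q : ℕ → ℝ → ℝ} {x : ℝ}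

theorem cuspDrop_eq_expDrop (hx : cuspWave q (4 * x)⁻¹ = 1) : cuspDrop q x = expDrop x := by
  rw [cuspDrop, hx, mul_one, expDrop]

theorem cuspDrop_eventuallyEq_expDrop_of_quarter_le (h : IsCuspData k b q) (hx : 1 / 4 ≤ x)
    (hx' : x < 7 / 24) : cuspDrop q =ᶠ[𝓝 x] expDrop := by
  filter_upwards [Ioo_mem_nhds (by linarith : 15 / 64 < x) hx'] with y hy
  have hlog := Real.log_two_gt_d9
  have hlog' := Real.log_two_lt_d9
  have hs : 6 / 7 < (4 * y)⁻¹ := by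
    rw [lt_inv_comm₀ (by norm_num) (by linarith [hy.1])]
    linarith [hy.2]
  have hs' : (4 * y)⁻¹ < 16 / 15 := by
    rw [inv_lt_comm₀ (by linarith [hy.1]) (by norm_num)]
    linarith [hy.1]
  refine cuspDrop_eq_expDrop (h.cuspWave_eq_one fun m ↦ ?_)
  rcases m.eq_zero_or_pos with rfl | hm
  · rw [Nat.cast_zero]
    exact le_abs.2 (.inr (by linarith))
  · have hm1 : (1 : ℝ) ≤ m := by exact_mod_cast hm
    exact le_abs.2 (.inl (by nlinarith))

theorem cuspDrop_eventuallyEq_expDrop (h : IsCuspData k b q) (hx : 0 < x)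
    (hs : ∀ m : ℕ, 1 / 4 ≤ |levelPhase m x|) :
    cuspDrop q =ᶠ[𝓝 x] expDrop := by
  have hcont : ContinuousAt (fun y : ℝ ↦ (4 * y)⁻¹) x := by fun_prop (disch := positivity)
  filter_upwards [hcont.eventually (h.cuspWave_eventuallyEq_one hs)] with y hy
  exact cuspDrop_eq_expDrop hy

theorem growthMap_eventuallyEq_of_lt_quarter (h : IsCuspData k b q) (hx : 0 < x)
    (hx' : x < 1 / 4) : growthMap q =ᶠ[𝓝 x] fun y ↦ 1 - cuspDrop q y := by
  filter_upwards [Ioo_mem_nhds hx hx'] with y hy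
  exact h.growthMap_of_mem_Icc_quarter ⟨hy.1.le, hy.2.le⟩

theorem deriv_growthMap_lt_neg_one (h : IsCuspData k b q) (hx : 1 / 4 ≤ x) (hx' : x < 7 / 24) :
    deriv (growthMap q) x < -1 := by
  set T : ℝ → ℝ := fun y ↦ Real.smoothTransition (32 * y - 8)
  have hTdiff : ContDiff ℝ 1 T := by fun_prop
  have hT := (hTdiff.differentiable one_ne_zero x).hasDerivAt
  have hTmono : Monotone T := Real.smoothTransition.monotone.comp fun y z hyz ↦ by linarith
  have hT1 : T x ≤ 1 := Real.smoothTransition.le_one _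
  have hT0 : 0 ≤ T x := Real.smoothTransition.nonneg _
  have heq : growthMap q =ᶠ[𝓝 x] fun y ↦ 1 - ((1 - T y) * expDrop y + T y * (2 * y)) := by
    filter_upwards [h.cuspDrop_eventuallyEq_expDrop_of_quarter_le hx hx',
      Ioo_mem_nhds (by linarith : 0 < x) hx'] with y hy hy'
    rw [h.growthMap_of_mem_Icc ⟨hy'.1.le, hy'.2.le⟩, hy]
  have hg := (hasDerivAt_expDrop (by linarith : 0 < x)).differentiableAt.hasDerivAt
  have hd := (((hT.const_sub 1).mul hg).add (hT.mul ((hasDerivAt_id' x).const_mul 2))).const_sub 1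
  rw [(hd.congr_of_eventuallyEq heq).deriv]
  have hdrop := expDrop_le_two_mul (by linarith) hx'.le
  have hdrop' := one_lt_deriv_expDrop hx hx'.le
  nlinarith [mul_nonneg (hTmono.deriv_nonneg (x := x)) (sub_nonneg.2 hdrop),
    mul_nonneg (sub_nonneg.2 hT1) (sub_nonneg.2 hdrop'.le)]

theorem deriv_growthMap_eq_of_away (h : IsCuspData k b q) (hx : 0 < x) (hx' : x < 1 / 4)
    (hs : ∀ m : ℕ, 1 / 4 ≤ |levelPhase m x|) :
    deriv (growthMap q) x = -deriv expDrop x := by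
  rw [(h.growthMap_eventuallyEq_of_lt_quarter hx hx').deriv_eq, deriv_const_sub,
    (h.cuspDrop_eventuallyEq_expDrop hx hs).deriv_eq]

theorem deriv_growthMap_neg_of_away (h : IsCuspData k b q) (hx : 0 < x) (hx' : x < 1 / 4)
    (hs : ∀ m : ℕ, 1 / 4 ≤ |levelPhase m x|) :
    deriv (growthMap q) x < 0 := by
  rw [h.deriv_growthMap_eq_of_away hx hx' hs]
  linarith [four_mul_expDrop_lt_deriv hx hx'.le, expDrop_pos hx]

theorem expanding_of_away (h : IsCuspData k b q) (hx : 0 < x) (hx' : x < 1 / 4)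
    (hs : ∀ m : ℕ, 1 / 4 ≤ |levelPhase m x|) :
    ∃ N, 1 < |deriv ((growthMap q)^[N]) x| := by
  have hf : growthMap q x = 1 - expDrop x := by
    rw [h.growthMap_of_mem_Icc_quarter ⟨hx.le, hx'.le⟩,
      (h.cuspDrop_eventuallyEq_expDrop hx hs).eq_of_nhds]
  have hpos := expDrop_pos hx
  have hdrop := expDrop_le_two_mul hx.le (by linarith)
  refine h.isTentAwayFromTop_growthMap.exists_one_lt_abs_deriv_iterate (by linarith) (by linarith)
    (lt_abs.2 (.inr ?_))
  rw [h.deriv_growthMap_eq_of_away hx hx' hs]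
  linarith [four_mul_expDrop_lt_deriv hx hx'.le]

end IsCuspData

end Shoulder

section LevelReturns

theorem deriv_exp_sub_one (t : ℝ) : deriv (fun t ↦ Real.exp t - 1) t = Real.exp t := by
  rw [deriv_sub_const, Real.deriv_exp]

theorem deriv_exp_sub_one_pos (t : ℝ) : 0 < deriv (fun t ↦ Real.exp t - 1) t :=
  deriv_exp_sub_one t ▸ Real.exp_pos t

theorem abs_exp_sub_one_le {t r : ℝ} (ht : |t| ≤ r) (hr : r ≤ 1) :
    |Real.exp t - 1| ≤ r + r ^ 2 := by
  have hexp := Real.abs_exp_sub_one_sub_id_le (ht.trans hr)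
  calc |Real.exp t - 1| = |t + (Real.exp t - 1 - t)| := by ring_nf
    _ ≤ |t| + t ^ 2 := (abs_add_le _ _).trans (add_le_add_right hexp _)
    _ ≤ r + r ^ 2 := add_le_add ht (sq_le_sq' (neg_le_of_abs_le ht) (le_of_abs_le ht))

namespace IsOscillatingStep

variable {k : ℕ} {η b A t : ℝ} {q : ℝ → ℝ}

theorem deriv_levelWiggle_ne_zero (h : IsOscillatingStep k η b q) (ht : levelWiggle q t = 0) :
    deriv (levelWiggle q) t ≠ 0 :=
  h.deriv_wiggle_ne_zero (by norm_num) deriv_exp_sub_one_pos (by simp) ht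

theorem abs_levelWiggle_le (h : IsOscillatingStep k η b q) (hη : η ≤ 1) (ht : |t| ≤ 1 / 4) :
    |levelWiggle q t| ≤ 1 / 3 := by
  have hexp := abs_exp_sub_one_le ht (by norm_num)
  have hq := h.abs_le_one hη (by positivity : 0 ≤ 64 * t ^ 2)
  rw [levelWiggle, wiggle, abs_mul]
  nlinarith [abs_nonneg (Real.exp t - 1)]

theorem levelWiggle_add_mul_deriv_pos (h : IsOscillatingStep k η b q) (hA : 4 ≤ A)
    (ht : |t| ≤ 1 / 4) (hb : b < 64 * t ^ 2) :
    0 < levelWiggle q t + A * deriv (levelWiggle q) t := by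
  have hu : DifferentiableAt ℝ (fun t ↦ Real.exp t - 1) t := by fun_prop
  have htu : 0 ≤ t * (Real.exp t - 1) := by
    rcases eq_or_ne t 0 with rfl | ht0
    · rw [zero_mul]
    · exact (mul_pos_of_deriv_pos deriv_exp_sub_one_pos (by simp) ht0).le
  have hW := h.le_deriv_wiggle (by norm_num) hu htu hb
  have hq := h.pos_of_last_lt _ hb
  have hexp := neg_le_of_abs_le (abs_exp_sub_one_le ht (by norm_num))
  rw [deriv_exp_sub_one] at hW
  have hexpq : 2 / 3 * q (64 * t ^ 2) ≤ Real.exp t * q (64 * t ^ 2) := by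
    gcongr
    linarith
  have hAW := mul_le_mul hA hW (by positivity) (by linarith)
  rw [levelWiggle, wiggle]
  nlinarith

-- The zeros of `levelWiggle q` lie where its derivative is at most `4 η`, which is what the
-- amplitude of the steps in `IsCuspData` is made for.
theorem abs_levelWiggle_add_mul_deriv_le (h : IsOscillatingStep k η b q) (hA : 0 ≤ A)
    (hb : 64 * t ^ 2 ≤ b) :
    |levelWiggle q t + A * deriv (levelWiggle q) t| ≤ (1 / 3 + 4 * A) * η := by
  have hη : 0 ≤ η := (abs_nonneg _).trans (h.abs_le _ ⟨h.last_mem.1.le, le_rfl⟩)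
  have hu : DifferentiableAt ℝ (fun t ↦ Real.exp t - 1) t := by fun_prop
  have ht : |t| ≤ 1 / 8 := abs_le_of_sq_le_sq (by linarith [h.last_mem.2]) (by norm_num)
  have hexp : |Real.exp t - 1| ≤ 9 / 64 := (abs_exp_sub_one_le ht (by norm_num)).trans (by norm_num)
  have hW : |levelWiggle q t| ≤ 1 / 3 * η :=
    (h.abs_wiggle_le (by norm_num) hb).trans (by gcongr; linarith)
  have hW' : |deriv (levelWiggle q) t| ≤ 4 * η := by
    refine (h.abs_deriv_wiggle_le (by norm_num) hu hb).trans ?_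
    rw [deriv_exp_sub_one, Real.abs_exp, abs_mul]
    gcongr
    nlinarith [le_of_abs_le hexp, abs_nonneg t, abs_nonneg (Real.exp t - 1)]
  calc |levelWiggle q t + A * deriv (levelWiggle q) t|
      ≤ |levelWiggle q t| + A * |deriv (levelWiggle q) t| := by
        rw [← abs_of_nonneg hA, ← abs_mul, abs_of_nonneg hA]
        exact abs_add_le _ _
    _ ≤ 1 / 3 * η + A * (4 * η) := by gcongr
    _ = (1 / 3 + 4 * A) * η := by ring

theorem levelWiggle_sqrt_last (h : IsOscillatingStep k η b q) :
    levelWiggle q √(b / 64) = 0 := by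
  apply wiggle_eq_zero
  rw [mul_sq_sqrt_div (by norm_num) h.last_mem.1.le, h.apply_last]

theorem levelWiggle_neg_sqrt_last (h : IsOscillatingStep k η b q) :
    levelWiggle q (-√(b / 64)) = 0 := by
  apply wiggle_eq_zero
  rw [neg_sq, mul_sq_sqrt_div (by norm_num) h.last_mem.1.le, h.apply_last]

end IsOscillatingStep

namespace IsCuspData

variable {k : ℕ → ℕ} {b : ℕ → ℝ} {q : ℕ → ℝ → ℝ} {m : ℕ} {x : ℝ}

theorem cuspDrop_eq_levelWiggle (h : IsCuspData k b q) (hx : 0 < x)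
    (hτ : |levelPhase m x| ≤ 3 / 8) :
    2 ^ (m + 1) * cuspDrop q x = (1 + x) * (1 + levelWiggle (q m) (levelPhase m x)) := by
  rw [cuspDrop, expNegInvGlue_of_pos (by positivity), h.exp_neg_mul_cuspWave hτ, levelPhase]
  field_simp

theorem two_pow_mul_one_sub_growthMap (h : IsCuspData k b q) (hx : 0 < x) (hx' : x ≤ 1 / 4)
    (hτ : |levelPhase m x| ≤ 3 / 8) :
    2 ^ (m + 1) * (1 - growthMap q x) =
      (1 + x) * (1 + levelWiggle (q m) (levelPhase m x)) := by
  rw [h.growthMap_of_mem_Icc_quarter ⟨hx.le, hx'⟩, sub_sub_cancel, h.cuspDrop_eq_levelWiggle hx hτ]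

theorem abs_levelWiggle_levelPhase_le (h : IsCuspData k b q) (hτ : |levelPhase m x| ≤ 1 / 4) :
    |levelWiggle (q m) (levelPhase m x)| ≤ 1 / 3 := by
  obtain ⟨η, hη, hq⟩ := h.isOscillatingStep_quarter m
  exact hq.abs_levelWiggle_le (hη.trans (by norm_num)) hτ

theorem two_pow_mul_one_sub_growthMap_lt (h : IsCuspData k b q) (hx : 0 < x) (hx' : x < 1 / 4)
    (hτ : |levelPhase m x| ≤ 1 / 4) : 2 ^ (m + 1) * (1 - growthMap q x) < 7 / 4 := by
  rw [h.two_pow_mul_one_sub_growthMap hx hx'.le (hτ.trans (by norm_num))]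
  nlinarith [le_of_abs_le (h.abs_levelWiggle_levelPhase_le hτ)]

theorem lt_growthMap_of_level (h : IsCuspData k b q) (hx : 0 < x) (hm : 1 ≤ m)
    (hτ : |levelPhase m x| ≤ 1 / 4) : 3 / 8 < growthMap q x := by
  have hlt := h.two_pow_mul_one_sub_growthMap_lt hx (lt_quarter_of_abs_levelPhase_le hx hm hτ) hτ
  have hpow : (2 : ℝ) ^ 2 ≤ 2 ^ (m + 1) := pow_le_pow_right₀ one_le_two (by lia)
  by_contra! hle
  nlinarith

theorem iterate_growthMap_of_level (h : IsCuspData k b q) (hx : 0 < x) (hm : 1 ≤ m)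
    (hτ : |levelPhase m x| ≤ 1 / 4) :
    (growthMap q)^[m + 2] x = (1 + x) * (1 + levelWiggle (q m) (levelPhase m x)) - 1 := by
  have hx' := lt_quarter_of_abs_levelPhase_le hx hm hτ
  rw [h.isTentAwayFromTop_growthMap.iterate_add_two_eq m (h.lt_growthMap_of_level hx hm hτ).le
    (h.two_pow_mul_one_sub_growthMap_lt hx hx' hτ).le,
    h.two_pow_mul_one_sub_growthMap hx hx'.le (hτ.trans (by norm_num))]

theorem iterate_growthMap_eq_self_iff (h : IsCuspData k b q) (hx : 0 < x) (hm : 1 ≤ m)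
    (hτ : |levelPhase m x| ≤ 1 / 4) :
    (growthMap q)^[m + 2] x = x ↔ levelWiggle (q m) (levelPhase m x) = 0 := by
  have hx1 : 1 + x ≠ 0 := by positivity
  rw [h.iterate_growthMap_of_level hx hm hτ, mul_add, mul_one, add_sub_right_comm,
    add_sub_cancel_left, add_eq_left, mul_eq_zero_iff_left hx1]

theorem two_pow_mul_deriv_growthMap (h : IsCuspData k b q) (hx : 0 < x) (hx' : x < 1 / 4)
    (hτ : |levelPhase m x| ≤ 1 / 4) :
    2 ^ (m + 1) * deriv (growthMap q) x =
      -(1 + (levelWiggle (q m) (levelPhase m x) +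
        (1 + x) / (4 * x ^ 2) * deriv (levelWiggle (q m)) (levelPhase m x))) := by
  have hτcont : ContinuousAt (fun y ↦ |levelPhase m y|) x :=
    (hasDerivAt_levelPhase m hx).continuousAt.abs
  have heq : (fun y ↦ 2 ^ (m + 1) * (1 - growthMap q y)) =ᶠ[𝓝 x]
      fun y ↦ (1 + y) * (1 + levelWiggle (q m) (levelPhase m y)) := by
    filter_upwards [Ioo_mem_nhds hx hx',
      hτcont.eventually_lt_const (hτ.trans_lt (by norm_num : (1 / 4 : ℝ) < 3 / 8))] with y hy hyτ
    exact h.two_pow_mul_one_sub_growthMap hy.1 hy.2.le hyτ.le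
  have hW := ((h.isOscillatingStep m).hasDerivAt_wiggle (c := 64) (t := levelPhase m x)
    (u := fun t ↦ Real.exp t - 1) (by fun_prop)).differentiableAt.hasDerivAt
  have hd := ((hasDerivAt_id' x).const_add 1).mul
    ((hW.comp x (hasDerivAt_levelPhase m hx)).const_add 1)
  have hleft := ((h.differentiable_growthMap x).hasDerivAt.const_sub 1).const_mul (2 ^ (m + 1))
  have hderiv := (hd.congr_of_eventuallyEq heq).unique hleft
  rw [comp_apply] at hderiv
  linear_combination hderiv

theorem deriv_iterate_growthMap_of_level (h : IsCuspData k b q) (hx : 0 < x) (hm : 1 ≤ m)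
    (hτ : |levelPhase m x| ≤ 1 / 4) :
    deriv (growthMap q)^[m + 2] x = 1 + (levelWiggle (q m) (levelPhase m x) +
      (1 + x) / (4 * x ^ 2) * deriv (levelWiggle (q m)) (levelPhase m x)) := by
  have hx' := lt_quarter_of_abs_levelPhase_le hx hm hτ
  rw [h.isTentAwayFromTop_growthMap.deriv_iterate_add_two m (h.lt_growthMap_of_level hx hm hτ)
    (h.two_pow_mul_one_sub_growthMap_lt hx hx' hτ), h.two_pow_mul_deriv_growthMap hx hx' hτ,
    neg_neg]

theorem four_le_one_add_div (hx : 0 < x) (hx' : x ≤ 1 / 4) : 4 ≤ (1 + x) / (4 * x ^ 2) := by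
  rw [le_div_iff₀ (by positivity)]
  nlinarith

theorem one_add_div_le (hx : 0 < x) (hx' : x ≤ 1 / 4) (hτ : |levelPhase m x| ≤ 1 / 4) :
    (1 + x) / (4 * x ^ 2) ≤ 5 * (m + 2) ^ 2 := by
  have hs : (4 * x)⁻¹ ≤ m + 2 := by
    have := neg_le_of_abs_le hτ
    rw [levelPhase] at this
    nlinarith [Real.log_two_lt_d9, (m.cast_nonneg : (0 : ℝ) ≤ m)]
  calc (1 + x) / (4 * x ^ 2) = 4 * (1 + x) * (4 * x)⁻¹ ^ 2 := by
        field_simp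
    _ ≤ 5 * ((m : ℝ) + 2) ^ 2 := by
      gcongr
      linarith

theorem one_lt_deriv_iterate_growthMap_of_level (h : IsCuspData k b q) (hx : 0 < x) (hm : 1 ≤ m)
    (hτ : |levelPhase m x| ≤ 1 / 4) (hb : b m < 64 * levelPhase m x ^ 2) :
    1 < deriv (growthMap q)^[m + 2] x := by
  have hx' := lt_quarter_of_abs_levelPhase_le hx hm hτ
  rw [h.deriv_iterate_growthMap_of_level hx hm hτ, lt_add_iff_pos_right]
  exact (h.isOscillatingStep m).levelWiggle_add_mul_deriv_pos (four_le_one_add_div hx hx'.le) hτ hb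

theorem deriv_iterate_growthMap_pos_of_level (h : IsCuspData k b q) (hx : 0 < x) (hm : 1 ≤ m)
    (hτ : |levelPhase m x| ≤ 1 / 4) : 0 < deriv (growthMap q)^[m + 2] x := by
  have hx' := lt_quarter_of_abs_levelPhase_le hx hm hτ
  rcases lt_or_ge (b m) (64 * levelPhase m x ^ 2) with hb | hb
  · exact one_pos.trans (h.one_lt_deriv_iterate_growthMap_of_level hx hm hτ hb)
  · have hA := one_add_div_le hx hx'.le hτ
    have hW := (h.isOscillatingStep m).abs_levelWiggle_add_mul_deriv_le
      (by positivity : 0 ≤ (1 + x) / (4 * x ^ 2)) hb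
    have hsmall : (1 / 3 + 4 * ((1 + x) / (4 * x ^ 2))) * (1 / (64 * ((m : ℝ) + 2) ^ 2)) < 1 := by
      rw [mul_one_div, div_lt_one (by positivity)]
      nlinarith [(m.cast_nonneg : (0 : ℝ) ≤ m)]
    rw [h.deriv_iterate_growthMap_of_level hx hm hτ]
    linarith [neg_le_of_abs_le hW]

theorem deriv_growthMap_neg_of_level (h : IsCuspData k b q) (hx : 0 < x) (hm : 1 ≤ m)
    (hτ : |levelPhase m x| ≤ 1 / 4) : deriv (growthMap q) x < 0 := by
  have hx' := lt_quarter_of_abs_levelPhase_le hx hm hτ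
  have hpos := h.deriv_iterate_growthMap_pos_of_level hx hm hτ
  rw [h.isTentAwayFromTop_growthMap.deriv_iterate_add_two m (h.lt_growthMap_of_level hx hm hτ)
    (h.two_pow_mul_one_sub_growthMap_lt hx hx' hτ), neg_pos] at hpos
  exact (pos_iff_neg_of_mul_neg hpos).1 (by positivity)

theorem isHyperbolicTrap_level (h : IsCuspData k b q) (hm : 1 ≤ m) :
    IsHyperbolicTrap (growthMap q) (m + 2)
      (Icc (levelPoint m (-√(b m / 64))) (levelPoint m √(b m / 64))) := by
  have hq := h.isOscillatingStep m
  have hβ : √(b m / 64) ≤ 1 / 4 := Real.sqrt_le_iff.2 ⟨by norm_num, by linarith [hq.last_mem.2]⟩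
  have hβ' : -√(b m / 64) ≤ 1 / 4 := (neg_nonpos.2 (Real.sqrt_nonneg _)).trans (by norm_num)
  have hmem {x : ℝ} (hx : x ∈ Icc (levelPoint m (-√(b m / 64))) (levelPoint m √(b m / 64))) :
      0 < x ∧ |levelPhase m x| ≤ 1 / 4 := by
    have hx0 := (levelPoint_pos m hβ').trans_le hx.1
    exact ⟨hx0, (abs_le.2 ⟨(levelPoint_le_iff hx0 hβ').1 hx.1,
      (le_levelPoint_iff hx0 hβ).1 hx.2⟩).trans hβ⟩
  refine .of_fixed_endpoints ?_ ?_ ?_ ?_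
  · refine monotoneOn_of_deriv_nonneg (convex_Icc _ _)
      (h.differentiable_growthMap.iterate _).continuous.continuousOn
      (h.differentiable_growthMap.iterate _).differentiableOn fun x hx ↦ ?_
    obtain ⟨hx0, hτ⟩ := hmem (interior_subset hx)
    exact (h.deriv_iterate_growthMap_pos_of_level hx0 hm hτ).le
  · rw [h.iterate_growthMap_eq_self_iff (levelPoint_pos m hβ') hm, levelPhase_levelPoint,
      hq.levelWiggle_neg_sqrt_last]
    rwa [levelPhase_levelPoint, abs_neg, abs_of_nonneg (Real.sqrt_nonneg _)]
  · rw [h.iterate_growthMap_eq_self_iff (levelPoint_pos m hβ) hm, levelPhase_levelPoint,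
      hq.levelWiggle_sqrt_last]
    rwa [levelPhase_levelPoint, abs_of_nonneg (Real.sqrt_nonneg _)]
  · intro x hx hfix
    obtain ⟨hx0, hτ⟩ := hmem hx
    rw [h.iterate_growthMap_eq_self_iff hx0 hm hτ] at hfix
    rw [abs_of_pos (h.deriv_iterate_growthMap_pos_of_level hx0 hm hτ),
      h.deriv_iterate_growthMap_of_level hx0 hm hτ, hfix, zero_add, Ne, add_eq_left]
    exact mul_ne_zero (by positivity) (hq.deriv_levelWiggle_ne_zero hfix)

theorem expanding_or_trapped_of_level (h : IsCuspData k b q) (hx : 0 < x) (hm : 1 ≤ m)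
    (hτ : |levelPhase m x| ≤ 1 / 4) :
    (∃ N, 1 < |deriv ((growthMap q)^[N]) x|) ∨
      ∃ N s, IsHyperbolicTrap (growthMap q) N s ∧ x ∈ s := by
  have hq := h.isOscillatingStep m
  rcases lt_or_ge (b m) (64 * levelPhase m x ^ 2) with hb | hb
  · exact .inl ⟨m + 2, lt_abs.2 (.inl (h.one_lt_deriv_iterate_growthMap_of_level hx hm hτ hb))⟩
  · have hβ : √(b m / 64) ≤ 1 / 4 := Real.sqrt_le_iff.2 ⟨by norm_num, by linarith [hq.last_mem.2]⟩
    have hτβ := abs_le.1 (Real.abs_le_sqrt (by linarith : levelPhase m x ^ 2 ≤ b m / 64))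
    exact .inr ⟨m + 2, _, h.isHyperbolicTrap_level hm,
      (levelPoint_le_iff hx ((neg_nonpos.2 (Real.sqrt_nonneg _)).trans (by norm_num))).2 hτβ.1,
      (le_levelPoint_iff hx hβ).2 hτβ.2⟩

end IsCuspData

end LevelReturns

section Dynamics

namespace IsCuspData

variable {k : ℕ → ℕ} {b : ℕ → ℝ} {q : ℕ → ℝ → ℝ} {x : ℝ}

theorem away_or_level (hx : 0 < x) (hx' : x < 1 / 4) :
    (∀ m : ℕ, 1 / 4 ≤ |levelPhase m x|) ∨ ∃ m : ℕ, 1 ≤ m ∧ |levelPhase m x| ≤ 1 / 4 := by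
  by_cases! hs : ∀ m : ℕ, 1 / 4 ≤ |levelPhase m x|
  · exact .inl hs
  · obtain ⟨m, hm⟩ := hs
    exact .inr ⟨m, one_le_of_abs_levelPhase_lt hx hx' hm, hm.le⟩

theorem deriv_growthMap_neg_of_pos (h : IsCuspData k b q) (hx : 0 < x) :
    deriv (growthMap q) x < 0 := by
  rcases lt_or_ge x (1 / 4) with hx4 | hx4
  · rcases away_or_level hx hx4 with hs | ⟨m, hm, hτ⟩
    · exact h.deriv_growthMap_neg_of_away hx hx4 hs
    · exact h.deriv_growthMap_neg_of_level hx hm hτ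
  · rcases lt_or_ge x (7 / 24) with hx7 | hx7
    · exact (h.deriv_growthMap_lt_neg_one hx4 hx7).trans (by norm_num)
    · exact h.deriv_growthMap_neg_of_gt (by linarith)

theorem expanding_or_trapped (h : IsCuspData k b q) (hx : x ≠ 0) :
    (∃ N, 1 < |deriv ((growthMap q)^[N]) x|) ∨
      ∃ N s, IsHyperbolicTrap (growthMap q) N s ∧ x ∈ s := by
  rcases hx.lt_or_gt with hx0 | hx0
  · exact .inl (h.expanding_of_neg hx0)
  rcases lt_or_ge x (1 / 4) with hx4 | hx4
  · rcases away_or_level hx0 hx4 with hs | ⟨m, hm, hτ⟩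
    · exact .inl (h.expanding_of_away hx0 hx4 hs)
    · exact h.expanding_or_trapped_of_level hx0 hm hτ
  · rcases lt_or_ge x (7 / 24) with hx7 | hx7
    · exact .inl ⟨1, lt_abs.2 (.inr (lt_neg_of_lt_neg (h.deriv_growthMap_lt_neg_one hx4 hx7)))⟩
    · exact h.expanding_or_trapped_of_gt (by linarith)

theorem monotoneOn_growthMap (h : IsCuspData k b q) : MonotoneOn (growthMap q) (Iic 0) :=
  monotoneOn_of_deriv_nonneg (convex_Iic 0) h.differentiable_growthMap.continuous.continuousOn
    h.differentiable_growthMap.differentiableOn fun x hx ↦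
      (h.deriv_growthMap_pos_of_neg (by simpa using hx)).le

theorem antitoneOn_growthMap (h : IsCuspData k b q) : AntitoneOn (growthMap q) (Ici 0) :=
  antitoneOn_of_deriv_nonpos (convex_Ici 0) h.differentiable_growthMap.continuous.continuousOn
    h.differentiable_growthMap.differentiableOn fun x hx ↦
      (h.deriv_growthMap_neg_of_pos (by simpa using hx)).le

theorem growthMap_zero (h : IsCuspData k b q) : growthMap q 0 = 1 := by
  simp [h.growthMap_of_nonpos le_rfl]

theorem growthMap_le_one (h : IsCuspData k b q) (x : ℝ) : growthMap q x ≤ 1 := by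
  rw [← h.growthMap_zero]
  rcases le_total x 0 with hx | hx
  · exact h.monotoneOn_growthMap hx self_mem_Iic hx
  · exact h.antitoneOn_growthMap self_mem_Ici hx hx

theorem mapsTo_growthMap (h : IsCuspData k b q) :
    MapsTo (growthMap q) (Icc (-1) 1) (Icc (-1) 1) := by
  refine fun x hx ↦ ⟨?_, h.growthMap_le_one x⟩
  rcases le_total x 0 with hx0 | hx0
  · refine le_trans (le_of_eq ?_) (h.monotoneOn_growthMap (by norm_num : (-1 : ℝ) ≤ 0) hx0 hx.1)
    rw [h.isTentAwayFromTop_growthMap.eq_left _ (by norm_num)]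
    norm_num
  · refine le_trans (le_of_eq ?_) (h.antitoneOn_growthMap hx0 (by norm_num : (0 : ℝ) ≤ 1) hx.2)
    rw [h.isTentAwayFromTop_growthMap.eq_right _ (by norm_num)]
    norm_num

theorem deriv_growthMap_eq_zero_iff (h : IsCuspData k b q) : deriv (growthMap q) x = 0 ↔ x = 0 := by
  constructor
  · intro hd
    by_contra hx
    rcases lt_or_gt_of_ne hx with hx | hx
    · exact (h.deriv_growthMap_pos_of_neg hx).ne' hd
    · exact (h.deriv_growthMap_neg_of_pos hx).ne hd
  · rintro rfl
    have hmax : IsLocalMax (growthMap q) 0 :=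
      .of_forall fun x ↦ (h.growthMap_le_one x).trans_eq h.growthMap_zero.symm
    exact hmax.deriv_eq_zero

theorem abs_deriv_iterate_growthMap_ne_one (h : IsCuspData k b q) {n : ℕ} (hn : 0 < n)
    (hx : IsPeriodicPt (growthMap q) n x) : |deriv ((growthMap q)^[n]) x| ≠ 1 :=
  abs_multiplier_ne_one_of_forall_expanding_or_trapped h.differentiable_growthMap
    (fun _ hy ↦ h.expanding_or_trapped (mt h.deriv_growthMap_eq_zero_iff.2 hy)) hn hx

end IsCuspData

end Dynamics

section PeriodicPoints

theorem IsOscillatingStep.exists_finset_subset {k : ℕ} {η b c : ℝ} {q φ : ℝ → ℝ} {S : Set ℝ}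
    (h : IsOscillatingStep k η b q) (hc : 0 < c) (hφ : Injective φ)
    (hS : ∀ t ∈ Ioc 0 √(b / c), q (c * t ^ 2) = 0 → φ t ∈ S) :
    ∃ s : Finset ℝ, ↑s ⊆ S ∧ s.card = k := by
  obtain ⟨Z, hcard, hZ⟩ := h.exists_zeros
  refine ⟨Z.image fun z ↦ φ √(z / c), ?_, ?_⟩
  · simp only [Finset.coe_image, image_subset_iff]
    intro z hz
    obtain ⟨hzb, hqz⟩ := hZ z hz
    exact hS _ ⟨Real.sqrt_pos.2 (div_pos hzb.1 hc), by gcongr; exact hzb.2⟩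
      (by rwa [mul_sq_sqrt_div hc hzb.1.le])
  · rw [Finset.card_image_of_injOn, hcard]
    intro z hz z' hz' hzz'
    have hsqrt : √(z / c) = √(z' / c) := hφ hzz'
    rw [← mul_sq_sqrt_div hc (hZ z hz).1.1.le, hsqrt, mul_sq_sqrt_div hc (hZ z' hz').1.1.le]

namespace IsCuspData

variable {k : ℕ → ℕ} {b : ℕ → ℝ} {q : ℕ → ℝ → ℝ} {m : ℕ} {t y : ℝ}

theorem third_add_mem_Per (h : IsCuspData k b q) (hy : y ∈ Icc (-√(b 0 / 576)) √(b 0 / 576))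
    (hy0 : y ≠ 0) (hfix : centralMap (q 0) y = y) : 1 / 3 + y ∈ Per (growthMap q) 2 := by
  constructor
  · rw [h.iterate_two_growthMap_third_add hy, IsFixedPt.iterate hfix 2]
  · intro j hj hj2
    obtain rfl : j = 1 := by lia
    rw [iterate_one, growthMap_third_add _ (by linarith [hy.1, h.sqrt_div_lt]), hfix]
    contrapose! hy0
    linarith

theorem levelPoint_mem_Per (h : IsCuspData k b q) (hm : 1 ≤ m) (ht : |t| ≤ 1 / 4)
    (hW : levelWiggle (q m) t = 0) : levelPoint m t ∈ Per (growthMap q) (m + 2) := by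
  set x := levelPoint m t
  have hx : 0 < x := levelPoint_pos m (le_of_abs_le ht)
  have hphase : levelPhase m x = t := levelPhase_levelPoint m t
  have hτ : |levelPhase m x| ≤ 1 / 4 := hphase ▸ ht
  have hx' := lt_quarter_of_abs_levelPhase_le hx hm hτ
  have hf := h.lt_growthMap_of_level hx hm hτ
  have hdrop : 2 ^ (m + 1) * (1 - growthMap q x) = 1 + x := by
    rw [h.two_pow_mul_one_sub_growthMap hx hx'.le (hτ.trans (by norm_num)), hphase, hW]
    ring
  refine ⟨(h.iterate_growthMap_eq_self_iff hx hm hτ).2 (hphase ▸ hW), fun j hj hjm ↦ ?_⟩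
  rcases hj.eq_or_lt with rfl | hj
  · rw [iterate_one]
    linarith
  · obtain ⟨i, rfl⟩ := Nat.exists_eq_add_of_le' hj
    have hhalf : 2 * (2 ^ (i + 1) * (1 - growthMap q x)) ≤ 1 + x := by
      rw [← hdrop, ← mul_assoc, ← pow_succ']
      have hpos : 0 ≤ 1 - growthMap q x := sub_nonneg.2 (h.growthMap_le_one x)
      gcongr
      · exact one_le_two
      · lia
    rw [h.isTentAwayFromTop_growthMap.iterate_add_two_eq i hf.le (by linarith)]
    linarith

theorem exists_finset_subset_Per (h : IsCuspData k b q) (m : ℕ) :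
    ∃ s : Finset ℝ, ↑s ⊆ Per (growthMap q) (m + 2) ∩ Icc (-1) 1 ∧ s.card = k m := by
  rcases m.eq_zero_or_pos with rfl | hm
  · refine (h.isOscillatingStep 0).exists_finset_subset (c := 576) (by norm_num)
      (add_right_injective (1 / 3)) fun t ht hqt ↦ ⟨?_, ?_⟩
    · exact h.third_add_mem_Per ⟨(neg_nonpos.2 (Real.sqrt_nonneg _)).trans ht.1.le, ht.2⟩ ht.1.ne'
        (by rw [centralMap, wiggle_eq_zero hqt, add_zero])
    · exact ⟨by linarith [ht.1], by linarith [ht.2, h.sqrt_div_lt]⟩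
  · have hβ : √(b m / 64) ≤ 1 / 4 :=
      Real.sqrt_le_iff.2 ⟨by norm_num, by linarith [(h.isOscillatingStep m).last_mem.2]⟩
    refine (h.isOscillatingStep m).exists_finset_subset (c := 64) (by norm_num)
      (LeftInverse.injective (levelPhase_levelPoint m)) fun t ht hqt ↦ ?_
    have ht' : |t| ≤ 1 / 4 := abs_le.2 ⟨by linarith [ht.1], ht.2.trans hβ⟩
    have hx := levelPoint_pos m (le_of_abs_le ht')
    have hx' := lt_quarter_of_abs_levelPhase_le hx hm (by rwa [levelPhase_levelPoint])
    exact ⟨h.levelPoint_mem_Per hm ht' (wiggle_eq_zero hqt), by linarith, by linarith⟩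

end IsCuspData

end PeriodicPoints

/-- for any sequence `(γ_n)` of positive integers there is a C^∞ unimodal
self-map of `[-1,1]` (unique critical point) all of whose periodic points are hyperbolic
and with at least `γ_n` periodic points of least period `n` for every `n ≥ 2`. -/
theorem stmt8 (γ : ℕ → ℕ) (hγ : ∀ n, 0 < γ n) :
    ∃ f : ℝ → ℝ, ContDiff ℝ (⊤ : ℕ∞) f ∧
      Set.MapsTo f (Set.Icc (-1:ℝ) 1) (Set.Icc (-1:ℝ) 1) ∧
      (∃! c : ℝ, c ∈ Set.Icc (-1:ℝ) 1 ∧ deriv f c = 0) ∧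
      (∀ x ∈ Set.Icc (-1:ℝ) 1, ∀ n : ℕ, 1 ≤ n → x ∈ Per f n →
        |deriv (f^[n]) x| ≠ 1) ∧
      (∀ n : ℕ, 2 ≤ n → ∃ s : Finset ℝ,
        ↑s ⊆ Per f n ∩ Set.Icc (-1:ℝ) 1 ∧ γ n ≤ s.card) := by
  obtain ⟨b, q, h⟩ := exists_isCuspData fun m ↦ hγ (m + 2)
  refine ⟨growthMap q, h.contDiff_growthMap, h.mapsTo_growthMap, ⟨0, ?_, ?_⟩, ?_, ?_⟩
  · exact ⟨by norm_num, h.deriv_growthMap_eq_zero_iff.2 rfl⟩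
  · exact fun c hc ↦ h.deriv_growthMap_eq_zero_iff.1 hc.2
  · exact fun x _ n hn hx ↦ h.abs_deriv_iterate_growthMap_ne_one hn hx.1
  · intro n hn
    obtain ⟨m, rfl⟩ := Nat.exists_eq_add_of_le' hn
    obtain ⟨s, hs, hcard⟩ := h.exists_finset_subset_Per m
    exact ⟨s, hs, hcard.ge⟩
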